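/- Let n ≥ 1 and let M be a model of PA⁻ + IΣn. Suppose that: there is a Σ_{n+1}-definable injection from the whole of M into [0,a) for some a ∈ M; N is an extension of M such that N = M[c] for some c ∈ N with c < a, meaning every element of N equals f(c) for some function f coded in M with domain [0,a); and N is a Σ_{n+1}-elementary cofinal extension of M. Then there is a Σ_{n+1}-definable (in N, with parameters from N) injection from the whole of N into [0,a). -/

import Mathlib

/- Shared development: first-order arithmetic in the language {0,1,+,·,<},
   the arithmetic hierarchy, fragments of arithmetic, and coded finite
   combinatorics inside models. -/

open FirstOrder Language

namespace ArithFC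

/-- Function symbols of the language of arithmetic: 0, 1, +, ·. -/
inductive Func : ℕ → Type
  | zero : Func 0
  | one : Func 0
  | add : Func 2
  | mul : Func 2

/-- Relation symbols of the language of arithmetic: <. -/
inductive Rel : ℕ → Type
  | lt : Rel 2

/-- The first-order language {0, 1, +, ·, <}. -/
def lang : Language :=
  { Functions := Func, Relations := Rel }

section Instances

variable (M : Type) [lang.Structure M]

instance : Zero M := ⟨Structure.funMap (L := lang) Func.zero ![]⟩
instance : One M := ⟨Structure.funMap (L := lang) Func.one ![]⟩
instance : Add M := ⟨fun x y => Structure.funMap (L := lang) Func.add ![x, y]⟩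
instance : Mul M := ⟨fun x y => Structure.funMap (L := lang) Func.mul ![x, y]⟩
instance : LT M := ⟨fun x y => Structure.RelMap (L := lang) Rel.lt ![x, y]⟩
instance : LE M := ⟨fun x y => x < y ∨ x = y⟩

end Instances

/-- The numeral `n` in a model. -/
def numM (M : Type) [lang.Structure M] : ℕ → M
  | 0 => 0
  | n + 1 => numM M n + 1

/-- `b` is nonstandard (greater than every numeral). -/
def Nonstd {M : Type} [lang.Structure M] (b : M) : Prop := ∀ n : ℕ, numM M n < b

/-- The atomic formula `t < u`. -/
def ltFm {α : Type} {n : ℕ} (t u : lang.Term (α ⊕ Fin n)) : lang.BoundedFormula α n :=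
  BoundedFormula.rel (Rel.lt : lang.Relations 2) ![t, u]

/-- Δ₀ formulas: built from atomic formulas by boolean connectives and
bounded universal quantification (this generates, up to logical equivalence,
the usual class of bounded formulas). -/
inductive IsDelta0 {α : Type} : ∀ n : ℕ, lang.BoundedFormula α n → Prop
  | falsum (n : ℕ) : IsDelta0 n BoundedFormula.falsum
  | equal (n : ℕ) (t u : lang.Term (α ⊕ Fin n)) : IsDelta0 n (BoundedFormula.equal t u)
  | rel (n l : ℕ) (R : lang.Relations l) (ts : Fin l → lang.Term (α ⊕ Fin n)) :
      IsDelta0 n (BoundedFormula.rel R ts)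
  | imp (n : ℕ) {φ ψ : lang.BoundedFormula α n} :
      IsDelta0 n φ → IsDelta0 n ψ → IsDelta0 n (φ.imp ψ)
  | bdAll (n : ℕ) (t : lang.Term (α ⊕ Fin n)) {φ : lang.BoundedFormula α (n + 1)} :
      IsDelta0 (n + 1) φ →
      IsDelta0 n
        (BoundedFormula.all ((ltFm (Term.var (Sum.inr (Fin.last n))) (t.liftAt 1 n)).imp φ))

mutual
  /-- Σ_m formulas. -/
  inductive SigmaFm {α : Type} : ℕ → ∀ n : ℕ, lang.BoundedFormula α n → Prop
    | delta0 (m n : ℕ) {φ : lang.BoundedFormula α n} : IsDelta0 n φ → SigmaFm m n φ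
    | ofPi (m n : ℕ) {φ : lang.BoundedFormula α n} : PiFm m n φ → SigmaFm (m + 1) n φ
    | ex (m n : ℕ) {φ : lang.BoundedFormula α (n + 1)} :
        SigmaFm (m + 1) (n + 1) φ → SigmaFm (m + 1) n φ.ex
  /-- Π_m formulas. -/
  inductive PiFm {α : Type} : ℕ → ∀ n : ℕ, lang.BoundedFormula α n → Prop
    | delta0 (m n : ℕ) {φ : lang.BoundedFormula α n} : IsDelta0 n φ → PiFm m n φ
    | ofSigma (m n : ℕ) {φ : lang.BoundedFormula α n} : SigmaFm m n φ → PiFm (m + 1) n φ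
    | all (m n : ℕ) {φ : lang.BoundedFormula α (n + 1)} :
        PiFm (m + 1) (n + 1) φ → PiFm (m + 1) n φ.all
end

/-- A `k`-ary relation on `M` is Σ_m-definable (with parameters from `M`). -/
def IsSigmaDef (m : ℕ) (M : Type) [lang.Structure M] {k : ℕ} (R : (Fin k → M) → Prop) : Prop :=
  ∃ (p : ℕ) (φ : lang.BoundedFormula (Fin k ⊕ Fin p) 0) (w : Fin p → M),
    SigmaFm m 0 φ ∧ ∀ v : Fin k → M, R v ↔ φ.Realize (Sum.elim v w) finZeroElim

/-- A subset of `M` is Σ_m-definable with parameters. -/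
def SigmaDef1 (m : ℕ) (M : Type) [lang.Structure M] (A : Set M) : Prop :=
  IsSigmaDef m M (k := 1) fun v => v 0 ∈ A

/-- A binary relation on `M` is Σ_m-definable with parameters. -/
def SigmaDef2 (m : ℕ) (M : Type) [lang.Structure M] (R : M → M → Prop) : Prop :=
  IsSigmaDef m M (k := 2) fun v => R (v 0) (v 1)

/-- A ternary relation on `M` is Σ_m-definable with parameters. -/
def SigmaDef3 (m : ℕ) (M : Type) [lang.Structure M] (R : M → M → M → Prop) : Prop :=
  IsSigmaDef m M (k := 3) fun v => R (v 0) (v 1) (v 2)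

/-- `M` is a model of PA⁻ (the nonnegative part of a discretely ordered
commutative semiring). -/
structure PAm (M : Type) [lang.Structure M] : Prop where
  add_assoc : ∀ x y z : M, x + y + z = x + (y + z)
  add_comm : ∀ x y : M, x + y = y + x
  mul_assoc : ∀ x y z : M, x * y * z = x * (y * z)
  mul_comm : ∀ x y : M, x * y = y * x
  ldistrib : ∀ x y z : M, x * (y + z) = x * y + x * z
  add_zero : ∀ x : M, x + 0 = x
  mul_zero : ∀ x : M, x * 0 = 0
  mul_one : ∀ x : M, x * 1 = x
  lt_trans : ∀ x y z : M, x < y → y < z → x < z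
  lt_irrefl : ∀ x : M, ¬x < x
  lt_total : ∀ x y : M, x < y ∨ x = y ∨ y < x
  add_lt_add : ∀ x y z : M, x < y → x + z < y + z
  mul_lt_mul : ∀ x y z : M, x < y → 0 < z → x * z < y * z
  sub_exists : ∀ x y : M, x < y → ∃ z, x + z = y
  zero_lt_one : (0 : M) < 1
  discrete : ∀ x : M, 0 < x → (1 : M) ≤ x
  zero_le : ∀ x : M, (0 : M) ≤ x

/-- `M` satisfies the Σ_m-induction scheme (with parameters). -/
def ISig (m : ℕ) (M : Type) [lang.Structure M] : Prop :=
  ∀ A : Set M, SigmaDef1 m M A → (0 : M) ∈ A → (∀ x, x ∈ A → x + 1 ∈ A) → ∀ x, x ∈ A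

/-- `M` satisfies the Σ_m-collection (bounding) scheme (with parameters). -/
def BSig (m : ℕ) (M : Type) [lang.Structure M] : Prop :=
  ∀ R : M → M → Prop, SigmaDef2 m M R → ∀ a : M,
    (∀ x, x < a → ∃ y, R x y) → ∃ b, ∀ x, x < a → ∃ y, y < b ∧ R x y

section Coding

variable {M : Type} [lang.Structure M]

/-- `z` is the Cantor pair `⟨x, y⟩`: `2z = (x+y)(x+y+1) + 2y`. -/
def IsPairC (z x y : M) : Prop := z + z = (x + y) * (x + y + 1) + (y + y)

/-- Gödel's β-function: `x = a mod ((i+1)·b + 1)`. -/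
def BetaC (a b i x : M) : Prop :=
  x < (i + 1) * b + 1 ∧ ∃ q, a = q * ((i + 1) * b + 1) + x

/-- The sequence coded by `s` (via a Cantor pair of β-function data) has value `x`
at place `i`. -/
def SeqAt (s i x : M) : Prop := ∃ a b, IsPairC s a b ∧ BetaC a b i x

/-- `c` codes the M-finite set `X` of cardinality `card`: `c = ⟨card, s⟩` where `s`
codes the strictly increasing enumeration of `X` of length `card`. -/
def CodesFinset (c : M) (X : Set M) (card : M) : Prop :=
  ∃ s, IsPairC c card s ∧
    (∀ i, i < card → ∃ x, x ∈ X ∧ SeqAt s i x) ∧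
    (∀ i j x y, i < j → j < card → SeqAt s i x → SeqAt s j y → x < y) ∧
    (∀ x, x ∈ X ↔ ∃ i, i < card ∧ SeqAt s i x)

/-- `X` is an M-finite (coded) set. -/
def MFinite (X : Set M) : Prop := ∃ c card : M, CodesFinset c X card

/-- `d` codes an `e`-element subset `D` of `[0, y)`, i.e. an element of `[y]^e`. -/
def CodesTupleIn (d e y : M) (D : Set M) : Prop :=
  CodesFinset d D e ∧ ∀ z ∈ D, z < y

/-- `f` codes a (finite) function defined on all of `[0, a)`. -/
def CodesFunOn (f a : M) : Prop :=
  ∀ x, x < a → (∃ y, SeqAt f x y) ∧ ∀ y y', SeqAt f x y → SeqAt f x y' → y = y'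

/-- `X` is an M-coded subset of `[0, a)`. -/
def MCodedSubset (a : M) (X : Set M) : Prop :=
  MFinite X ∧ ∀ x ∈ X, x < a

end Coding

/-- An `M`-ultrafilter on `a`: an ultrafilter of the Boolean algebra of
M-finite subsets of `[0, a)`. -/
structure MUltra (M : Type) [lang.Structure M] (a : M) where
  sets : Set (Set M)
  mem_coded : ∀ X ∈ sets, MCodedSubset a X
  univ_mem : {x : M | x < a} ∈ sets
  superset_mem : ∀ X Y : Set M, X ∈ sets → MCodedSubset a Y → X ⊆ Y → Y ∈ sets
  inter_mem : ∀ X Y : Set M, X ∈ sets → Y ∈ sets → X ∩ Y ∈ sets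
  empty_not_mem : (∅ : Set M) ∉ sets
  ultra : ∀ X : Set M, MCodedSubset a X → X ∈ sets ∨ {x : M | x < a ∧ x ∉ X} ∈ sets

section Principles

variable (M : Type) [lang.Structure M]

/-- `F` is (the graph of) a Σ_m-definable injection from `[0, y)` into `[0, x)`. -/
def SigmaInjRel (m : ℕ) (F : M → M → Prop) (y x : M) : Prop :=
  SigmaDef2 m M F ∧
    (∀ u, u < y → ∃ v, v < x ∧ F u v) ∧
    (∀ u v v', u < y → F u v → F u v' → v = v') ∧
    (∀ u u' v, u < y → u' < y → F u v → F u' v → u = u')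

/-- There exists a Σ_m-definable injection from `[0, y)` into `[0, x)`. -/
def ExSigmaInj (m : ℕ) (y x : M) : Prop := ∃ F : M → M → Prop, SigmaInjRel M m F y x

/-- There exists a Σ_m-definable injection from all of `M` into `[0, a)`. -/
def SigmaInjWhole (m : ℕ) (a : M) : Prop :=
  ∃ F : M → M → Prop, SigmaDef2 m M F ∧
    (∀ u, ∃ v, v < a ∧ F u v) ∧
    (∀ u v v', F u v → F u v' → v = v') ∧
    (∀ u u' v, F u v → F u' v → u = u')

/-- CARD(Σ_m): no Σ_m-definable multivalued map sends `M` injectively below `a`. -/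
def CARD (m : ℕ) : Prop :=
  ∀ F : M → M → Prop, SigmaDef2 m M F → ∀ a : M,
    (∀ x, ∃ y, y < a ∧ F x y) →
      ∃ x0 x1 y, x0 ≠ x1 ∧ y < a ∧ F x0 y ∧ F x1 y

/-- GPHP(Σ_m): for every `x` there is `y` with no Σ_m-definable injection of
`[0,y)` into `[0,x)`. -/
def GPHP (m : ℕ) : Prop := ∀ x : M, ∃ y : M, ¬ExSigmaInj M m y x

/-- WPHP(Σ_m): for `x > 0` there is no Σ_m-definable injection of `[0,2x)` into `[0,x)`. -/
def WPHP (m : ℕ) : Prop := ∀ x : M, 0 < x → ¬ExSigmaInj M m (x + x) x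

/-- `C` is a Σ_m-definable `k`-coloring of `[y]^e` (acting on codes of
`e`-element subsets of `[0,y)`, independently of the chosen code). -/
def IsColoring (m : ℕ) (e y k : M) (C : M → M → Prop) : Prop :=
  SigmaDef2 m M C ∧
    (∀ d D, CodesTupleIn d e y D → ∃ i, i < k ∧ C d i) ∧
    (∀ d d' D i i', CodesTupleIn d e y D → CodesTupleIn d' e y D → C d i → C d' i' → i = i')

/-- FRT^e_k(Σ_m): every Σ_m-definable `k`-coloring of some `[y]^e` has an
M-finite homogeneous set of cardinality `x`, for every `x`. -/
def FRT (m : ℕ) (e k : M) : Prop :=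
  ∀ x : M, ∃ y : M, ∀ C : M → M → Prop, IsColoring M m e y k C →
    ∃ (c : M) (H : Set M), CodesFinset c H x ∧ (∀ z ∈ H, z < y) ∧
      ∃ i, ∀ d D, CodesFinset d D e → D ⊆ H → C d i

/-- fairFRT^e_k(Σ_m): the homogeneous set is required to be given as the range of a
Σ_m-definable injection from `[0,x)` into `[0,y)`. -/
def FairFRT (m : ℕ) (e k : M) : Prop :=
  ∀ x : M, ∃ y : M, ∀ C : M → M → Prop, IsColoring M m e y k C →
    ∃ H : M → M → Prop, SigmaInjRel M m H x y ∧
      ∃ i, ∀ d D, CodesFinset d D e → (∀ z ∈ D, ∃ u, u < x ∧ H u z) → C d i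

/-- `C` is a Σ_m-definable `k`-coloring of `[0, y)`. -/
def IsColoring1 (m : ℕ) (y k : M) (C : M → M → Prop) : Prop :=
  SigmaDef2 m M C ∧
    (∀ z, z < y → ∃ i, i < k ∧ C z i) ∧
    (∀ z i i', z < y → C z i → C z i' → i = i')

/-- FRT¹_k(Σ_m): every Σ_m-definable `k`-coloring of some `[0,y)` has an M-finite
homogeneous set of cardinality `x`, for every `x`. -/
def FRT1 (m : ℕ) (k : M) : Prop :=
  ∀ x : M, ∃ y : M, ∀ C : M → M → Prop, IsColoring1 M m y k C →
    ∃ (c : M) (H : Set M), CodesFinset c H x ∧ (∀ z ∈ H, z < y) ∧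
      ∃ i, ∀ z ∈ H, C z i

/-- fairFRT¹_k(Σ_m). -/
def FairFRT1 (m : ℕ) (k : M) : Prop :=
  ∀ x : M, ∃ y : M, ∀ C : M → M → Prop, IsColoring1 M m y k C →
    ∃ H : M → M → Prop, SigmaInjRel M m H x y ∧
      ∃ i, ∀ u v, u < x → H u v → C v i

end Principles

section Approx

variable {M : Type} [lang.Structure M]

/-- `f` is (the graph of) a partial function. -/
def IsPartialFun (f : M → M → Prop) : Prop := ∀ x y y', f x y → f x y' → y = y'

/-- `s` codes an approximation to the partial function `f` of length `b`. -/
def IsApprox (f : M → M → Prop) (s b : M) : Prop :=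
  (∀ i, i < b → ∃ v, SeqAt s i v) ∧
    (∀ i u v x y, i + 1 < b → SeqAt s i u → SeqAt s (i + 1) v → x ≤ u → f x y → y ≤ v)

/-- `s` codes a `g`-stretched approximation to the partial function `f` of length `b`. -/
def IsStretchedApprox (f g : M → M → Prop) (s b : M) : Prop :=
  (∀ i, i < b → ∃ v, SeqAt s i v) ∧
    (∀ i u w v x y, i + 1 < b → SeqAt s i u → g u w → SeqAt s (i + 1) v →
      x ≤ w → f x y → y ≤ v)

/-- The eventual (limit) value of `fun s => h s ·` is `x`. -/
def EvLim (h : M → M → Prop) (x : M) : Prop := ∃ s : M, ∀ t, s < t → h t x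

end Approx

/-- PΣ_m: every partial Σ_m-definable function admits approximations of every length. -/
def PSig (m : ℕ) (M : Type) [lang.Structure M] : Prop :=
  ∀ f : M → M → Prop, SigmaDef2 m M f → IsPartialFun f → ∀ b : M, ∃ s, IsApprox f s b

section Extensions

variable (M N : Type) [lang.Structure M] [lang.Structure N]

/-- `g : M → N` is Σ_m-elementary: Σ_m formulas with parameters from `M` transfer. -/
def SigmaElem (m : ℕ) (g : M → N) : Prop :=
  ∀ (p : ℕ) (φ : lang.BoundedFormula (Fin p) 0), SigmaFm m 0 φ →
    ∀ v : Fin p → M, (φ.Realize v finZeroElim ↔ φ.Realize (g ∘ v) finZeroElim)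

/-- The extension `g : M → N` is cofinal. -/
def Cofinal (g : M → N) : Prop := ∀ z : N, ∃ x : M, z ≤ g x

/-- `[0,a]^M = [0,a]^N`: every element of `N` below `g a` comes from `M`. -/
def SameBelow (g : M → N) (a : M) : Prop := ∀ z : N, z ≤ g a → ∃ x : M, g x = z

end Extensions

section Ramsey

variable {M : Type} [lang.Structure M]

/-- `f` is an M-coded `k`-coloring of `[y]^e` (assigning colors to codes of
`e`-subsets of `[0,y)`, independently of the code). -/
def CodedColoring (f e y k : M) : Prop :=
  (∀ d D, CodesTupleIn d e y D → ∃ i, i < k ∧ SeqAt f d i) ∧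
    (∀ d d' D i i', CodesTupleIn d e y D → CodesTupleIn d' e y D →
      SeqAt f d i → SeqAt f d' i' → i = i')

/-- The coded coloring `f` of `[y]^e` has an M-coded homogeneous set of cardinality `x`. -/
def CodedHomog (f e y x : M) : Prop :=
  ∃ (c : M) (H : Set M), CodesFinset c H x ∧ (∀ z ∈ H, z < y) ∧
    ∃ i, ∀ d D, CodesFinset d D e → D ⊆ H → SeqAt f d i

/-- `y = r(x, e, k)`: `y` is the least size guaranteeing coded homogeneous sets of
cardinality `x` for all coded `k`-colorings of `e`-subsets. -/
def IsRamsey (x e k y : M) : Prop :=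
  (∀ f, CodedColoring f e y k → CodedHomog f e y x) ∧
    (∀ y', y' < y → ∃ f, CodedColoring f e y' k ∧ ¬CodedHomog f e y' x)

/-- `y = r^(b)(x, e, k)`: the `b`-th iterate of the Ramsey function inside `M`. -/
def IterRamsey (x e k b y : M) : Prop :=
  ∃ s : M, SeqAt s 0 x ∧ SeqAt s b y ∧ (∀ i, i ≤ b → ∃ u, SeqAt s i u) ∧
    (∀ i u v, i < b → SeqAt s i u → SeqAt s (i + 1) v → IsRamsey u e k v)

end Ramsey

end ArithFC


namespace ArithFC

/-! ### Elementary algebra in discretely ordered semirings -/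

/-- The order-theoretic part of PA⁻ not contained in `IsStrictOrderedRing`. -/
class ArP (K : Type) [CommSemiring K] [LinearOrder K] : Prop where
  nonneg : ∀ x : K, 0 ≤ x
  sub_ex : ∀ x y : K, x ≤ y → ∃ z, x + z = y
  disc : ∀ x : K, 0 < x → 1 ≤ x

section Alg

variable {K : Type} [CommSemiring K] [LinearOrder K] [IsStrictOrderedRing K] [ArP K]

theorem alg_lt_succ (x y : K) : x < y + 1 ↔ x ≤ y := by
  constructor
  · intro h
    by_contra h'
    push Not at h'
    obtain ⟨z, rfl⟩ := ArP.sub_ex y x h'.le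
    have hz : 0 < z := by grind
    have := ArP.disc z hz
    grind
  · intro h
    grind [zero_lt_one (α := K)]

theorem alg_dvd_sub {a b c : K} (h1 : a ∣ b) (h2 : a ∣ b + c) : a ∣ c := by
  obtain ⟨p, rfl⟩ := h1
  obtain ⟨q, hq⟩ := h2
  rcases le_total p q with h | h
  · obtain ⟨d, rfl⟩ := ArP.sub_ex p q h
    exact ⟨d, by grind⟩
  · have h3 : a * q ≤ a * p := mul_le_mul_of_nonneg_left h (ArP.nonneg a)
    have h4 := ArP.nonneg c
    have : c = 0 := by grind
    rw [this]; exact dvd_zero a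

/-- Coprimality of the moduli of Gödel's β-function. -/
theorem alg_coprime {e i j b x : K} (he : ∀ k, k < b → (k + 1) ∣ e) (hi : i < b) (hj : j < b)
    (hij : i ≠ j) (h : ((i + 1) * e + 1) ∣ ((j + 1) * e + 1) * x) : ((i + 1) * e + 1) ∣ x := by
  have key : ((i + 1) * e + 1) ∣ e * x → ((i + 1) * e + 1) ∣ x := by
    intro h1
    have h2 : ((i + 1) * e + 1) ∣ (i + 1) * (e * x) := h1.mul_left _
    have h3 : ((i + 1) * e + 1) ∣ (i + 1) * (e * x) + x :=
      ⟨x, by ring⟩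
    exact alg_dvd_sub h2 h3
  apply key
  have fin : ∀ d : K, 0 < d → d ≤ b → ((i + 1) * e + 1) ∣ d * x → ((i + 1) * e + 1) ∣ e * x := by
    intro d hd hdb hdx
    have h1 := ArP.disc d hd
    obtain ⟨d', hd'⟩ := ArP.sub_ex 1 d h1
    have h2 : d' < b := by grind [zero_lt_one (α := K)]
    have h3 := he d' h2
    have : d' + 1 = d := by grind
    rw [this] at h3
    obtain ⟨q, rfl⟩ := h3
    have : d * q * x = q * (d * x) := by ring
    rw [this]
    exact hdx.mul_left _
  rcases lt_or_gt_of_ne hij with hlt | hlt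
  · obtain ⟨d, rfl⟩ := ArP.sub_ex i j hlt.le
    refine fin d (by grind) (by grind [ArP.nonneg i]) ?_
    refine alg_dvd_sub (b := (i + 1) * (((i + d + 1) * e + 1) * x)) (h.mul_left _) ?_
    exact ⟨(i + d + 1) * x, by ring⟩
  · obtain ⟨d, rfl⟩ := ArP.sub_ex j i hlt.le
    refine fin d (by grind) (by grind [ArP.nonneg j]) ?_
    refine alg_dvd_sub (b := (j + 1) * ((j + d + 1) * e + 1) * x) ((Dvd.intro_left (j+1) rfl).mul_right x) ?_
    have : (j + 1) * ((j + d + 1) * e + 1) * x + d * x =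
      (j + d + 1) * (((j + 1) * e + 1) * x) := by ring
    rw [this]
    exact h.mul_left _

theorem alg_le_mul (q : K) {m : K} (hm : 0 < m) : q ≤ q * m := by
  have h1 := ArP.disc m hm
  have := mul_le_mul_of_nonneg_left h1 (ArP.nonneg q)
  grind

theorem alg_divmod {q q' m x x' : K} (hx : x < m) (hx' : x' < m)
    (h : q * m + x = q' * m + x') : q = q' ∧ x = x' := by
  have aux : ∀ q q' x x' : K, x < m → q < q' → q * m + x < q' * m + x' := by
    intro q q' x x' hx hq
    obtain ⟨d, rfl⟩ := ArP.sub_ex q q' hq.le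
    have hd : 0 < d := by grind
    have h1 := alg_le_mul m hd
    have h2 := ArP.nonneg x'
    have h3 : (q + d) * m = q * m + m * d := by ring
    rw [h3]
    grind
  rcases lt_trichotomy q q' with h1 | h1 | h1
  · exact absurd h (aux _ _ _ _ hx h1).ne
  · subst h1
    exact ⟨rfl, by grind⟩
  · exact absurd h (aux _ _ _ _ hx' h1).ne'

theorem alg_sq_le (x : K) : x ≤ x * x := by
  rcases (ArP.nonneg x).eq_or_lt with h | h
  · rw [← h]; simp
  · exact alg_le_mul x h

theorem alg_pair_le (x y : K) : x ≤ (x + y) * (x + y) + y ∧ y ≤ (x + y) * (x + y) + y := by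
  have := alg_sq_le (x + y)
  have := ArP.nonneg x
  have := ArP.nonneg y
  constructor <;> grind

theorem alg_pair_inj {x y x' y' : K} (h : (x + y) * (x + y) + y = (x' + y') * (x' + y') + y') :
    x = x' ∧ y = y' := by
  have aux : ∀ x y x' y' : K, x + y < x' + y' →
      (x + y) * (x + y) + y < (x' + y') * (x' + y') + y' := by
    intro x y x' y' h
    obtain ⟨d, hd⟩ := ArP.sub_ex _ _ h.le
    have hd0 : 0 < d := by grind
    have h1 := ArP.disc d hd0
    rw [← hd]
    have h2 : (x + y) * 1 ≤ (x + y) * d := mul_le_mul_of_nonneg_left h1 (ArP.nonneg _)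
    have h3 : (0 : K) < d * d := mul_pos hd0 hd0
    have := ArP.nonneg x
    have := ArP.nonneg y
    have := ArP.nonneg y'
    have h4 : (x + y + d) * (x + y + d) = (x + y) * (x + y) + (x + y) * d + (x + y) * d + d * d := by
      ring
    rw [h4]
    grind
  rcases lt_trichotomy (x + y) (x' + y') with h1 | h1 | h1
  · exact absurd h (aux _ _ _ _ h1).ne
  · rw [h1] at h
    have : y = y' := by grind
    exact ⟨by grind, this⟩
  · exact absurd h (aux _ _ _ _ h1).ne'

theorem alg_cpair_inj {x y x' y' : K}
    (h : (x + y) * (x + y + 1) + (y + y) = (x' + y') * (x' + y' + 1) + (y' + y')) :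
    x = x' ∧ y = y' := by
  have aux : ∀ x y x' y' : K, x + y < x' + y' →
      (x + y) * (x + y + 1) + (y + y) < (x' + y') * (x' + y' + 1) + (y' + y') := by
    intro x y x' y' h
    obtain ⟨d, hd⟩ := ArP.sub_ex _ _ h.le
    have hd0 : 0 < d := by grind
    have h1 := ArP.disc d hd0
    rw [← hd]
    have h2 : (x + y) * 1 ≤ (x + y) * d := mul_le_mul_of_nonneg_left h1 (ArP.nonneg _)
    have h3 : (0 : K) < d * d := mul_pos hd0 hd0
    have := ArP.nonneg x
    have := ArP.nonneg y
    have := ArP.nonneg y'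
    have h4 : (x + y + d) * (x + y + d + 1) =
      (x + y) * (x + y + 1) + (x + y) * d + (x + y) * d + d * d + d := by ring
    rw [h4]
    grind
  rcases lt_trichotomy (x + y) (x' + y') with h1 | h1 | h1
  · exact absurd h (aux _ _ _ _ h1).ne
  · rw [h1] at h
    have : y = y' := by
      rcases lt_trichotomy y y' with h2 | h2 | h2 <;> grind
    exact ⟨by grind, this⟩
  · exact absurd h (aux _ _ _ _ h1).ne'

theorem alg_cpair_le {z x y : K} (h : z + z = (x + y) * (x + y + 1) + (y + y)) :
    x ≤ z ∧ y ≤ z := by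
  have h0 : (x + y) + (x + y) ≤ (x + y) * (x + y + 1) := by
    have := alg_sq_le (x + y)
    have h2 : (x + y) * (x + y + 1) = (x + y) * (x + y) + (x + y) := by ring
    rw [h2]; grind
  have := ArP.nonneg x
  have := ArP.nonneg y
  constructor <;> by_contra hh <;> grind

end Alg

/-! ### Models of PA⁻ as ordered semirings -/

variable {K : Type} [lang.Structure K]

/-- The semiring structure of a model of PA⁻. -/
@[reducible] def PAm.cs (h : PAm K) : CommSemiring K where
  add_assoc := h.add_assoc
  add_comm := h.add_comm
  zero_add x := by rw [h.add_comm]; exact h.add_zero x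
  add_zero := h.add_zero
  mul_assoc := h.mul_assoc
  mul_comm := h.mul_comm
  left_distrib := h.ldistrib
  right_distrib x y z := by rw [h.mul_comm, h.ldistrib, h.mul_comm z, h.mul_comm z]
  zero_mul x := by rw [h.mul_comm]; exact h.mul_zero x
  mul_zero := h.mul_zero
  one_mul x := by rw [h.mul_comm]; exact h.mul_one x
  mul_one := h.mul_one
  nsmul := nsmulRec

open Classical in
/-- The linear order of a model of PA⁻. -/
@[reducible] noncomputable def PAm.lo (h : PAm K) : LinearOrder K where
  le_refl x := Or.inr rfl
  le_trans x y z := by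
    rintro (h1|rfl) (h2|rfl)
    · exact Or.inl (h.lt_trans _ _ _ h1 h2)
    · exact Or.inl h1
    · exact Or.inl h2
    · exact Or.inr rfl
  le_antisymm x y := by
    rintro (h1|rfl) (h2|h2)
    · exact (h.lt_irrefl _ (h.lt_trans _ _ _ h1 h2)).elim
    · exact h2.symm
    · rfl
    · rfl
  le_total x y := by
    rcases h.lt_total x y with h1|h1|h1
    · exact Or.inl (Or.inl h1)
    · exact Or.inl (Or.inr h1)
    · exact Or.inr (Or.inl h1)
  lt_iff_le_not_ge x y := by
    constructor
    · intro h1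
      refine ⟨Or.inl h1, ?_⟩
      rintro (h2|rfl)
      · exact (h.lt_irrefl _ (h.lt_trans _ _ _ h1 h2)).elim
      · exact h.lt_irrefl _ h1
    · rintro ⟨h1|rfl, h2⟩
      · exact h1
      · exact (h2 (Or.inr rfl)).elim
  toDecidableLE := fun _ _ => Classical.propDecidable _

theorem PAm.sor (h : PAm K) : @IsStrictOrderedRing K h.cs.toSemiring h.lo.toPartialOrder := by
  letI := h.cs
  letI := h.lo
  have hl : ∀ x y z : K, x < y → x + z < y + z := h.add_lt_add
  have hm : ∀ x y z : K, x < y → 0 < z → x * z < y * z := h.mul_lt_mul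
  refine @IsStrictOrderedRing.mk K _ _ ?_ ?_ ?_ ?_ ?_
  · refine @IsOrderedCancelAddMonoid.mk K _ _ ⟨?_, ?_⟩ ?_ ?_
    · rintro x y (h1 | rfl) z
      · exact Or.inl (hl _ _ _ h1)
      · exact Or.inr rfl
    · rintro x y (h1 | rfl) z
      · rw [h.add_comm z, h.add_comm z]; exact Or.inl (hl _ _ _ h1)
      · exact Or.inr rfl
    · intro x y z h1
      by_contra h2
      have h3 := hl z y x (not_le.mp h2)
      rw [h.add_comm z, h.add_comm y] at h3
      exact absurd h1 (not_le.mpr h3)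
    · intro x y z h1
      by_contra h2
      have h3 := hl z y x (not_le.mp h2)
      exact absurd h1 (not_le.mpr h3)
  · exact ⟨Or.inl h.zero_lt_one⟩
  · exact ⟨0, 1, (show (0:K) < 1 from h.zero_lt_one).ne⟩
  · refine ⟨?_⟩
    intro x hx y z hyz
    show x * y < x * z
    rw [h.mul_comm x, h.mul_comm x]
    exact hm _ _ _ hyz hx
  · refine ⟨?_⟩
    intro x hx y z hyz
    exact hm _ _ _ hyz hx

theorem PAm.arp (h : PAm K) : @ArP K h.cs h.lo := by
  letI := h.cs
  letI := h.lo
  refine @ArP.mk K _ _ h.zero_le ?_ h.discrete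
  rintro x y (h1 | rfl)
  · exact h.sub_exists x y h1
  · exact ⟨0, h.add_zero x⟩

/-! Transfer of the algebraic facts to models of PA⁻. -/

theorem PAm.lt_succ (h : PAm K) (x y : K) : x < y + 1 ↔ x ≤ y :=
  @alg_lt_succ K h.cs h.lo h.sor h.arp x y

theorem PAm.coprime (h : PAm K) {e i j b x : K} (he : ∀ k, k < b → ∃ q, e = q * (k + 1))
    (hi : i < b) (hj : j < b)
    (hij : i ≠ j) (hd : ∃ q, ((j + 1) * e + 1) * x = q * ((i + 1) * e + 1)) :
    ∃ q, x = q * ((i + 1) * e + 1) := by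
  letI := h.cs
  letI := h.lo
  haveI := h.sor
  haveI := h.arp
  have := alg_coprime (K := K) (e := e) (i := i) (j := j) (b := b) (x := x)
    (fun k hk => by obtain ⟨q, hq⟩ := he k hk; exact ⟨q, hq.trans (h.mul_comm _ _)⟩) hi hj hij
    (by obtain ⟨q, hq⟩ := hd; exact ⟨q, hq.trans (h.mul_comm _ _)⟩)
  obtain ⟨q, hq⟩ := this
  exact ⟨q, hq.trans (h.mul_comm _ _)⟩

theorem PAm.le_mul (h : PAm K) (q : K) {m : K} (hm : 0 < m) : q ≤ q * m :=
  @alg_le_mul K h.cs h.lo h.sor h.arp q m hm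

theorem PAm.divmod (h : PAm K) {q q' m x x' : K} (hx : x < m) (hx' : x' < m)
    (hh : q * m + x = q' * m + x') : q = q' ∧ x = x' :=
  @alg_divmod K h.cs h.lo h.sor h.arp q q' m x x' hx hx' hh

theorem PAm.pair_le (h : PAm K) (x y : K) :
    x ≤ (x + y) * (x + y) + y ∧ y ≤ (x + y) * (x + y) + y :=
  @alg_pair_le K h.cs h.lo h.sor h.arp x y

theorem PAm.pair_inj (h : PAm K) {x y x' y' : K}
    (hh : (x + y) * (x + y) + y = (x' + y') * (x' + y') + y') : x = x' ∧ y = y' :=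
  @alg_pair_inj K h.cs h.lo h.sor h.arp x y x' y' hh

theorem PAm.cpair_inj (h : PAm K) {x y x' y' : K}
    (hh : (x + y) * (x + y + 1) + (y + y) = (x' + y') * (x' + y' + 1) + (y' + y')) :
    x = x' ∧ y = y' :=
  @alg_cpair_inj K h.cs h.lo h.sor h.arp x y x' y' hh

theorem PAm.cpair_le (h : PAm K) {z x y : K}
    (hh : z + z = (x + y) * (x + y + 1) + (y + y)) : x ≤ z ∧ y ≤ z :=
  @alg_cpair_le K h.cs h.lo h.sor h.arp z x y hh

end ArithFC

namespace ArithFC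

/-! ### Semantic definability classes -/

/-- Uniform predicates on assignments. -/
abbrev Pr := ∀ (K : Type) [lang.Structure K], (ℕ → K) → Prop

/-- Uniform terms on assignments. -/
abbrev Tm := ∀ (K : Type) [lang.Structure K], (ℕ → K) → K

/-- Prepend a value to an assignment. -/
def cons {K : Type} (x : K) (v : ℕ → K) : ℕ → K
  | 0 => x
  | i + 1 => v i

theorem cons_eta {K : Type} (v : ℕ → K) : cons (v 0) (fun i => v (i + 1)) = v := by
  funext i; cases i <;> rfl

/-- The uniform term is given by a term of the language. -/
def TT (t : Tm) : Prop := ∃ τ : lang.Term ℕ, ∀ (K : Type) [lang.Structure K] (v : ℕ → K),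
  t K v = τ.realize v

theorem TT.var (i : ℕ) : TT (fun _ _ v => v i) := ⟨Term.var i, fun _ _ _ => rfl⟩

theorem TT.zero : TT (fun _ _ _ => 0) :=
  ⟨Term.func (L := lang) (l := 0) Func.zero ![], fun K _ v => by
    show Structure.funMap (L := lang) Func.zero ![] = _
    simp only [Term.realize]
    congr 1
    funext i; exact i.elim0⟩

theorem TT.one : TT (fun _ _ _ => 1) :=
  ⟨Term.func (L := lang) (l := 0) Func.one ![], fun K _ v => by
    show Structure.funMap (L := lang) Func.one ![] = _
    simp only [Term.realize]
    congr 1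
    funext i; exact i.elim0⟩

theorem TT.add {s t : Tm} (hs : TT s) (ht : TT t) : TT (fun K _ v => s K v + t K v) := by
  obtain ⟨σ, hσ⟩ := hs
  obtain ⟨τ, hτ⟩ := ht
  refine ⟨Term.func (L := lang) (l := 2) Func.add ![σ, τ], fun K _ v => ?_⟩
  show Structure.funMap (L := lang) Func.add ![s K v, t K v] = _
  simp only [Term.realize]
  congr 1
  funext i
  refine Fin.cases ?_ (fun i => ?_) i
  · exact hσ K v
  · refine Fin.cases ?_ (fun i => i.elim0) i
    exact hτ K v

theorem TT.mul {s t : Tm} (hs : TT s) (ht : TT t) : TT (fun K _ v => s K v * t K v) := by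
  obtain ⟨σ, hσ⟩ := hs
  obtain ⟨τ, hτ⟩ := ht
  refine ⟨Term.func (L := lang) (l := 2) Func.mul ![σ, τ], fun K _ v => ?_⟩
  show Structure.funMap (L := lang) Func.mul ![s K v, t K v] = _
  simp only [Term.realize]
  congr 1
  funext i
  refine Fin.cases ?_ (fun i => ?_) i
  · exact hσ K v
  · refine Fin.cases ?_ (fun i => i.elim0) i
    exact hτ K v

/-- A choice of terms for a family of uniform terms. -/
theorem TT.subst {t : Tm} (ht : TT t) {σ : ℕ → Tm} (hσ : ∀ i, TT (σ i)) :
    TT (fun K _ v => t K (fun i => σ i K v)) := by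
  obtain ⟨τ, hτ⟩ := ht
  choose s hs using hσ
  refine ⟨τ.subst s, fun K _ v => ?_⟩
  beta_reduce
  rw [hτ, Term.realize_subst]
  congr 1
  funext i
  exact hs i K v

/-- Uniformly Δ₀ predicates. -/
def D0 (R : Pr) : Prop :=
  ∀ (α : Type) (n : ℕ) (σ : ℕ → lang.Term (α ⊕ Fin n)),
    ∃ φ : lang.BoundedFormula α n, IsDelta0 n φ ∧
      ∀ (K : Type) [lang.Structure K] (v : α → K) (xs : Fin n → K),
        φ.Realize v xs ↔ R K (fun i => (σ i).realize (Sum.elim v xs))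

theorem D0.congr {R S : Pr} (h : D0 R)
    (hRS : ∀ (K : Type) [lang.Structure K] (v : ℕ → K), R K v ↔ S K v) : D0 S := by
  intro α n σ
  obtain ⟨φ, h1, h2⟩ := h α n σ
  exact ⟨φ, h1, fun K _ v xs => (h2 K v xs).trans (hRS K _)⟩

theorem D0.falsum : D0 (fun _ _ _ => False) := fun _ n _ =>
  ⟨BoundedFormula.falsum, IsDelta0.falsum n, fun _ _ _ _ => Iff.rfl⟩

theorem D0.imp {R S : Pr} (hR : D0 R) (hS : D0 S) : D0 (fun K _ v => R K v → S K v) := by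
  intro α n σ
  obtain ⟨φ, h1, h2⟩ := hR α n σ
  obtain ⟨ψ, h3, h4⟩ := hS α n σ
  refine ⟨φ.imp ψ, IsDelta0.imp n h1 h3, fun K _ v xs => ?_⟩
  rw [BoundedFormula.realize_imp, h2, h4]

theorem D0.not {R : Pr} (hR : D0 R) : D0 (fun K _ v => ¬ R K v) := hR.imp D0.falsum

theorem D0.and {R S : Pr} (hR : D0 R) (hS : D0 S) : D0 (fun K _ v => R K v ∧ S K v) :=
  (hR.imp hS.not).not.congr fun K _ v => by tauto

theorem D0.or {R S : Pr} (hR : D0 R) (hS : D0 S) : D0 (fun K _ v => R K v ∨ S K v) :=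
  (hR.not.imp hS).congr fun K _ v => by tauto

theorem D0.iff {R S : Pr} (hR : D0 R) (hS : D0 S) : D0 (fun K _ v => R K v ↔ S K v) :=
  ((hR.imp hS).and (hS.imp hR)).congr fun K _ v => by tauto

theorem D0.eq {s t : Tm} (hs : TT s) (ht : TT t) : D0 (fun K _ v => s K v = t K v) := by
  intro α n ρ
  obtain ⟨σ, hσ⟩ := hs
  obtain ⟨τ, hτ⟩ := ht
  refine ⟨BoundedFormula.equal (σ.subst ρ) (τ.subst ρ), IsDelta0.equal _ _ _, fun K _ v xs => ?_⟩
  simp only [BoundedFormula.Realize, Term.realize_subst]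
  rw [hσ, hτ]

theorem D0.lt {s t : Tm} (hs : TT s) (ht : TT t) : D0 (fun K _ v => s K v < t K v) := by
  intro α n ρ
  obtain ⟨σ, hσ⟩ := hs
  obtain ⟨τ, hτ⟩ := ht
  refine ⟨ltFm (σ.subst ρ) (τ.subst ρ), IsDelta0.rel _ _ _ _, fun K _ v xs => ?_⟩
  show Structure.RelMap (L := lang) Rel.lt _ ↔ Structure.RelMap (L := lang) Rel.lt _
  rw [hσ, hτ]
  apply iff_of_eq
  congr 1
  funext i
  refine Fin.cases ?_ (fun i => ?_) i
  · exact Term.realize_subst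
  · refine Fin.cases ?_ (fun i => i.elim0) i
    exact Term.realize_subst

theorem D0.le {s t : Tm} (hs : TT s) (ht : TT t) : D0 (fun K _ v => s K v ≤ t K v) :=
  (D0.lt hs ht).or (D0.eq hs ht)

/-- Lift of a term under a quantifier. -/
theorem realize_lift1 {α : Type} {n : ℕ} (t : lang.Term (α ⊕ Fin n)) (K : Type)
    [lang.Structure K] (v : α → K) (xs : Fin n → K) (x : K) :
    (t.liftAt 1 n).realize (Sum.elim v (Fin.snoc xs x : Fin (n + 1) → K)) =
      t.realize (Sum.elim v xs) := by
  rw [Term.realize_liftAt]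
  congr 1
  funext i
  rcases i with i | i
  · rfl
  · simp only [Function.comp, Sum.map_inr, Sum.elim_inr, i.is_lt, if_true]
    exact Fin.snoc_castSucc (α := fun _ => K) x xs i

/-- Extension of a term substitution under a quantifier. -/
def liftS {α : Type} {n : ℕ} (σ : ℕ → lang.Term (α ⊕ Fin n)) : ℕ → lang.Term (α ⊕ Fin (n + 1))
  | 0 => Term.var (Sum.inr (Fin.last n))
  | i + 1 => (σ i).liftAt 1 n

theorem realize_liftS {α : Type} {n : ℕ} (σ : ℕ → lang.Term (α ⊕ Fin n)) (K : Type)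
    [lang.Structure K] (v : α → K) (xs : Fin n → K) (x : K) :
    (fun i => (liftS σ i).realize (Sum.elim v (Fin.snoc xs x : Fin (n + 1) → K))) =
      cons x (fun i => (σ i).realize (Sum.elim v xs)) := by
  funext i
  cases i with
  | zero => exact Fin.snoc_last (α := fun _ => K) x xs
  | succ i => exact realize_lift1 _ _ _ _ _

theorem D0.ball {t : Tm} (ht : TT t) {R : ∀ (K : Type) [lang.Structure K], K → (ℕ → K) → Prop}
    (hR : D0 (fun K _ v => R K (v 0) (fun i => v (i + 1)))) :
    D0 (fun K _ v => ∀ x, x < t K v → R K x v) := by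
  intro α n σ
  obtain ⟨τ, hτ⟩ := ht
  obtain ⟨φ, h1, h2⟩ := hR α (n + 1) (liftS σ)
  refine ⟨_, IsDelta0.bdAll n (τ.subst σ) h1, fun K _ v xs => ?_⟩
  rw [BoundedFormula.realize_all]
  refine forall_congr' fun x => ?_
  rw [BoundedFormula.realize_imp, h2, realize_liftS]
  refine imp_congr ?_ Iff.rfl
  show Structure.RelMap (L := lang) Rel.lt _ ↔ Structure.RelMap (L := lang) Rel.lt _
  apply iff_of_eq
  congr 1
  funext i
  refine Fin.cases ?_ (fun i => ?_) i
  · exact Fin.snoc_last (α := fun _ => K) x xs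
  · refine Fin.cases ?_ (fun i => i.elim0) i
    refine (realize_lift1 _ _ _ _ _).trans ?_
    rw [Term.realize_subst]
    exact (hτ K _).symm

theorem D0.bex {t : Tm} (ht : TT t) {R : ∀ (K : Type) [lang.Structure K], K → (ℕ → K) → Prop}
    (hR : D0 (fun K _ v => R K (v 0) (fun i => v (i + 1)))) :
    D0 (fun K _ v => ∃ x, x < t K v ∧ R K x v) :=
  (D0.ball (R := fun K _ x v => ¬ R K x v) ht hR.not).not.congr fun K _ v => by
    push Not; rfl

theorem D0.subst {R : Pr} (hR : D0 R) {σ : ℕ → Tm} (hσ : ∀ i, TT (σ i)) :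
    D0 (fun K _ v => R K (fun i => σ i K v)) := by
  intro α n ρ
  choose s hs using hσ
  obtain ⟨φ, h1, h2⟩ := hR α n (fun i => (s i).subst ρ)
  refine ⟨φ, h1, fun K _ v xs => ?_⟩
  rw [h2]
  simp only [Term.realize_subst, hs]

/-! ### The hierarchy -/

/-- Uniformly Σ_m predicates (in models of PA⁻), in single quantifier normal form. -/
def NS : ℕ → Pr → Prop
  | 0, R => ∃ Q : Pr, D0 Q ∧ ∀ (K : Type) [lang.Structure K], PAm K → ∀ v, R K v ↔ Q K v
  | m + 1, R => ∃ Q : Pr, NS m Q ∧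
      ∀ (K : Type) [lang.Structure K], PAm K → ∀ v, R K v ↔ ∃ x, ¬ Q K (cons x v)

/-- Uniformly Π_m predicates. -/
def NP (m : ℕ) (R : Pr) : Prop := NS m (fun K _ v => ¬ R K v)

theorem NS.congr {m : ℕ} {R S : Pr} (h : NS m R)
    (hRS : ∀ (K : Type) [lang.Structure K], PAm K → ∀ v : ℕ → K, R K v ↔ S K v) : NS m S := by
  cases m with
  | zero =>
    obtain ⟨Q, h1, h2⟩ := h
    exact ⟨Q, h1, fun K _ hK v => (hRS K hK v).symm.trans (h2 K hK v)⟩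
  | succ m =>
    obtain ⟨Q, h1, h2⟩ := h
    exact ⟨Q, h1, fun K _ hK v => (hRS K hK v).symm.trans (h2 K hK v)⟩

theorem NP.congr {m : ℕ} {R S : Pr} (h : NP m R)
    (hRS : ∀ (K : Type) [lang.Structure K], PAm K → ∀ v : ℕ → K, R K v ↔ S K v) : NP m S :=
  NS.congr (m := m) h fun K _ hK v => not_congr (hRS K hK v)

theorem NP.not {m : ℕ} {R : Pr} (h : NP m R) : NS m (fun K _ v => ¬ R K v) := h

theorem NS.not {m : ℕ} {R : Pr} (h : NS m R) : NP m (fun K _ v => ¬ R K v) :=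
  NS.congr h fun K _ _ v => by tauto

theorem NS.subst {m : ℕ} {R : Pr} (hR : NS m R) {σ : ℕ → Tm} (hσ : ∀ i, TT (σ i)) :
    NS m (fun K _ v => R K (fun i => σ i K v)) := by
  induction m generalizing R σ with
  | zero =>
    obtain ⟨Q, h1, h2⟩ := hR
    exact ⟨_, h1.subst hσ, fun K _ hK v => h2 K hK _⟩
  | succ m ih =>
    obtain ⟨Q, h1, h2⟩ := hR
    have h3 : ∀ i, TT (fun K _ v => cons (v 0) (fun i => σ i K (fun j => v (j + 1))) i) := by
      intro i
      cases i with
      | zero => exact TT.var 0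
      | succ i => exact (hσ i).subst (σ := fun j _ _ v => v (j + 1)) fun j => TT.var (j + 1)
    refine ⟨_, ih h1 h3, fun K _ hK v => ?_⟩
    beta_reduce
    rw [h2 K hK]
    rfl

theorem NP.subst {m : ℕ} {R : Pr} (hR : NP m R) {σ : ℕ → Tm} (hσ : ∀ i, TT (σ i)) :
    NP m (fun K _ v => R K (fun i => σ i K v)) :=
  NS.subst (m := m) hR hσ

theorem NS.shift {m : ℕ} {R : Pr} (hR : NS m R) :
    NS m (fun K _ v => R K (fun i => v (i + 1))) :=
  hR.subst (σ := fun i _ _ v => v (i + 1)) fun i => TT.var (i + 1)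

theorem NP.toS {m : ℕ} {R : Pr} (h : NP m R) : NS (m + 1) R := by
  refine ⟨_, NS.shift h, fun K _ _ v => ?_⟩
  constructor
  · intro hh
    exact ⟨0, fun h' => h' hh⟩
  · rintro ⟨x, hx⟩
    exact not_not.mp hx

theorem NS.toP {m : ℕ} {R : Pr} (h : NS m R) : NP (m + 1) R := NP.toS h.not

theorem NS.ofD0_zero {R : Pr} (h : D0 R) : NS 0 R := ⟨R, h, fun _ _ _ _ => Iff.rfl⟩

theorem NS.succ {m : ℕ} {R : Pr} (h : NS m R) : NS (m + 1) R := by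
  induction m generalizing R with
  | zero =>
    obtain ⟨Q, h1, h2⟩ := h
    exact (NP.toS (m := 0) (NS.ofD0_zero h1.not)).congr fun K _ hK v => (h2 K hK v).symm
  | succ m ih =>
    obtain ⟨Q, h1, h2⟩ := h
    exact ⟨Q, ih h1, h2⟩

theorem NP.succ {m : ℕ} {R : Pr} (h : NP m R) : NP (m + 1) R := NS.succ (m := m) h

theorem NS.mono {m k : ℕ} (hmk : m ≤ k) {R : Pr} (h : NS m R) : NS k R := by
  induction hmk with
  | refl => exact h
  | step _ ih => exact ih.succ

theorem NP.mono {m k : ℕ} (hmk : m ≤ k) {R : Pr} (h : NP m R) : NP k R := NS.mono hmk h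

theorem NS.ofD0 {m : ℕ} {R : Pr} (h : D0 R) : NS m R := (NS.ofD0_zero h).mono (Nat.zero_le m)

theorem NP.ofD0 {m : ℕ} {R : Pr} (h : D0 R) : NP m R := NS.ofD0 h.not

/-- The pairing term. -/
def pr {K : Type} [lang.Structure K] (x y : K) : K := (x + y) * (x + y) + y

theorem TT.pr {s t : Tm} (hs : TT s) (ht : TT t) : TT (fun K _ v => pr (s K v) (t K v)) :=
  ((hs.add ht).mul (hs.add ht)).add ht

/-- Closure properties of a level of the hierarchy. -/
structure Clo (m : ℕ) : Prop where
  and : ∀ {R S : Pr}, NS m R → NS m S → NS m (fun K _ v => R K v ∧ S K v)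
  or : ∀ {R S : Pr}, NS m R → NS m S → NS m (fun K _ v => R K v ∨ S K v)
  bex : ∀ {t : Tm}, TT t → ∀ {R : ∀ (K : Type) [lang.Structure K], K → (ℕ → K) → Prop},
    NS m (fun K _ v => R K (v 0) (fun i => v (i + 1))) →
    NS m (fun K _ v => ∃ x, x < t K v ∧ R K x v)

theorem Clo.ex2 {m : ℕ} (hm : Clo m)
    {Q : ∀ (K : Type) [lang.Structure K], K → K → (ℕ → K) → Prop}
    (hQ : NS m (fun K _ v => Q K (v 0) (v 1) (fun i => v (i + 2)))) :
    NS (m + 1) (fun K _ v => ∃ x y, ¬ Q K x y v) := by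
  have h1 : NS m (fun K _ v => (∃ x, x < v 0 + 1 ∧ ∃ y, y < v 0 + 1 ∧
      (v 0 = pr x y ∧ Q K x y (fun i => v (i + 1)))) ∨
      ¬ ∃ x, x < v 0 + 1 ∧ ∃ y, y < v 0 + 1 ∧ v 0 = pr x y) := by
    refine hm.or ?_ ?_
    · refine hm.bex ((TT.var 0).add TT.one) ?_
      refine hm.bex ((TT.var 1).add TT.one) ?_
      refine hm.and (NS.ofD0 (D0.eq (TT.var 2) ((TT.var 1).pr (TT.var 0)))) ?_
      refine hQ.subst (σ := fun i K _ v => cons (v 1) (cons (v 0) (fun i => v (i + 3))) i) ?_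
      rintro (_ | _ | i)
      · exact TT.var 1
      · exact TT.var 0
      · exact TT.var (i + 3)
    · refine NS.ofD0 (D0.not ?_)
      refine D0.bex ((TT.var 0).add TT.one) ?_
      refine D0.bex ((TT.var 1).add TT.one) ?_
      exact (D0.eq (TT.var 2) ((TT.var 1).pr (TT.var 0)))
  refine ⟨_, h1, fun K _ hK v => ?_⟩
  constructor
  · rintro ⟨x, y, hxy⟩
    have hle := hK.pair_le x y
    refine ⟨pr x y, ?_⟩
    rintro (⟨x', _, y', _, he, hq⟩ | hh)
    · obtain ⟨rfl, rfl⟩ := hK.pair_inj (show pr x y = pr x' y' from he)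
      exact hxy hq
    · exact hh ⟨x, (hK.lt_succ _ _).2 hle.1, y, (hK.lt_succ _ _).2 hle.2, rfl⟩
  · rintro ⟨w, hw⟩
    have hw' := not_or.mp hw
    obtain ⟨x, hx, y, hy, hxy⟩ := not_not.mp hw'.2
    exact ⟨x, y, fun hq => hw'.1 ⟨x, hx, y, hy, hxy, hq⟩⟩

theorem clo (m : ℕ) : Clo m := by
  induction m with
  | zero =>
    refine ⟨?_, ?_, ?_⟩
    · rintro R S ⟨Q, h1, h2⟩ ⟨Q', h1', h2'⟩
      exact ⟨_, h1.and h1', fun K _ hK v => and_congr (h2 K hK v) (h2' K hK v)⟩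
    · rintro R S ⟨Q, h1, h2⟩ ⟨Q', h1', h2'⟩
      exact ⟨_, h1.or h1', fun K _ hK v => or_congr (h2 K hK v) (h2' K hK v)⟩
    · rintro t ht R ⟨Q, h1, h2⟩
      refine ⟨_, D0.bex (R := fun K _ x v => Q K (cons x v)) ht ?_, fun K _ hK v => ?_⟩
      · exact h1.congr fun K _ v => by rw [cons_eta]
      · exact exists_congr fun x => and_congr Iff.rfl (h2 K hK (cons x v))
  | succ m ih =>
    refine ⟨?_, ?_, ?_⟩
    · rintro R S ⟨Q, h1, h2⟩ ⟨Q', h1', h2'⟩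
      refine (ih.ex2 (Q := fun K _ x y v => Q K (cons x v) ∨ Q' K (cons y v)) ?_).congr ?_
      · refine ih.or ?_ ?_
        · refine h1.subst (σ := fun i K _ v => cons (v 0) (fun i => v (i + 2)) i) ?_
          rintro (_ | i)
          · exact TT.var 0
          · exact TT.var (i + 2)
        · refine h1'.subst (σ := fun i K _ v => cons (v 1) (fun i => v (i + 2)) i) ?_
          rintro (_ | i)
          · exact TT.var 1
          · exact TT.var (i + 2)
      · intro K _ hK v
        rw [h2 K hK, h2' K hK]
        constructor
        · rintro ⟨x, y, h⟩
          exact ⟨⟨x, fun h' => h (Or.inl h')⟩, ⟨y, fun h' => h (Or.inr h')⟩⟩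
        · rintro ⟨⟨x, hx⟩, ⟨y, hy⟩⟩
          exact ⟨x, y, fun h' => h'.elim hx hy⟩
    · rintro R S ⟨Q, h1, h2⟩ ⟨Q', h1', h2'⟩
      refine ⟨_, ih.and h1 h1', fun K _ hK v => ?_⟩
      beta_reduce
      rw [h2 K hK, h2' K hK, ← exists_or]
      exact exists_congr fun x => by tauto
    · rintro t ht R ⟨Q, h1, h2⟩
      refine (ih.ex2 (Q := fun K _ x y v => Q K (cons y (cons x v)) ∨ ¬ x < t K v) ?_).congr ?_
      · refine ih.or ?_ ?_
        · refine h1.subst (σ := fun i K _ v => cons (v 1) (cons (v 0) (fun i => v (i + 2))) i) ?_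
          rintro (_ | _ | i)
          · exact TT.var 1
          · exact TT.var 0
          · exact TT.var (i + 2)
        · refine NS.ofD0 (D0.not (D0.lt (TT.var 0) ?_))
          exact ht.subst (σ := fun j _ _ v => v (j + 2)) fun j => TT.var (j + 2)
      · intro K _ hK v
        constructor
        · rintro ⟨x, y, h⟩
          have h' := not_or.mp h
          exact ⟨x, not_not.mp h'.2, (h2 K hK (cons x v)).2 ⟨y, h'.1⟩⟩
        · rintro ⟨x, hx, hr⟩
          obtain ⟨y, hy⟩ := (h2 K hK (cons x v)).1 hr
          exact ⟨x, y, fun h' => h'.elim hy (fun h'' => h'' hx)⟩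

theorem NS.and {m : ℕ} {R S : Pr} (hR : NS m R) (hS : NS m S) :
    NS m (fun K _ v => R K v ∧ S K v) := (clo m).and hR hS

theorem NS.or {m : ℕ} {R S : Pr} (hR : NS m R) (hS : NS m S) :
    NS m (fun K _ v => R K v ∨ S K v) := (clo m).or hR hS

theorem NS.imp {m : ℕ} {R S : Pr} (hR : NP m R) (hS : NS m S) :
    NS m (fun K _ v => R K v → S K v) :=
  (hR.not.or hS).congr fun K _ _ v => by tauto

theorem NS.bex {m : ℕ} {t : Tm} (ht : TT t)
    {R : ∀ (K : Type) [lang.Structure K], K → (ℕ → K) → Prop}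
    (hR : NS m (fun K _ v => R K (v 0) (fun i => v (i + 1)))) :
    NS m (fun K _ v => ∃ x, x < t K v ∧ R K x v) := (clo m).bex ht hR

theorem NS.ex {m : ℕ} {R : ∀ (K : Type) [lang.Structure K], K → (ℕ → K) → Prop}
    (hR : NS (m + 1) (fun K _ v => R K (v 0) (fun i => v (i + 1)))) :
    NS (m + 1) (fun K _ v => ∃ x, R K x v) := by
  obtain ⟨Q, h1, h2⟩ := hR
  refine ((clo m).ex2 (Q := fun K _ x y v => Q K (cons y (cons x v))) ?_).congr ?_
  · refine h1.subst (σ := fun i K _ v => cons (v 1) (cons (v 0) (fun i => v (i + 2))) i) ?_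
    rintro (_ | _ | i)
    · exact TT.var 1
    · exact TT.var 0
    · exact TT.var (i + 2)
  · intro K _ hK v
    exact exists_congr fun x => (h2 K hK (cons x v)).symm

theorem NP.and {m : ℕ} {R S : Pr} (hR : NP m R) (hS : NP m S) :
    NP m (fun K _ v => R K v ∧ S K v) :=
  NS.congr (NS.or hR hS) fun K _ _ v => by tauto

theorem NP.or {m : ℕ} {R S : Pr} (hR : NP m R) (hS : NP m S) :
    NP m (fun K _ v => R K v ∨ S K v) :=
  NS.congr (NS.and hR hS) fun K _ _ v => by tauto

theorem NP.imp {m : ℕ} {R S : Pr} (hR : NS m R) (hS : NP m S) :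
    NP m (fun K _ v => R K v → S K v) :=
  NS.congr (NS.and hR hS) fun K _ _ v => by tauto

theorem NP.ball {m : ℕ} {t : Tm} (ht : TT t)
    {R : ∀ (K : Type) [lang.Structure K], K → (ℕ → K) → Prop}
    (hR : NP m (fun K _ v => R K (v 0) (fun i => v (i + 1)))) :
    NP m (fun K _ v => ∀ x, x < t K v → R K x v) :=
  NS.congr (NS.bex (R := fun K _ x v => ¬ R K x v) ht hR) fun K _ _ v => by push Not; rfl

theorem NP.all {m : ℕ} {R : ∀ (K : Type) [lang.Structure K], K → (ℕ → K) → Prop}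
    (hR : NP (m + 1) (fun K _ v => R K (v 0) (fun i => v (i + 1)))) :
    NP (m + 1) (fun K _ v => ∀ x, R K x v) :=
  NS.congr (NS.ex (R := fun K _ x v => ¬ R K x v) hR) fun K _ _ v => by push Not; rfl

end ArithFC

namespace ArithFC

/-! ### From formulas to semantic classes -/

theorem TT.ofTerm {β : Type} (t : lang.Term β) (σ : β → ℕ) :
    TT (fun _ _ v => t.realize (fun b => v (σ b))) :=
  ⟨t.relabel σ, fun _ _ _ => Term.realize_relabel.symm⟩

/-- Assignment to free and bound variables read off from a single assignment. -/
theorem elim_split {α : Type} {n : ℕ} (σ : α ⊕ Fin n → ℕ) {K : Type} (v : ℕ → K) :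
    Sum.elim (fun a => v (σ (Sum.inl a))) (fun i => v (σ (Sum.inr i))) = fun b => v (σ b) := by
  funext b; cases b <;> rfl

/-- Extension of a variable numbering under a quantifier. -/
def liftN {α : Type} {n : ℕ} (σ : α ⊕ Fin n → ℕ) : α ⊕ Fin (n + 1) → ℕ
  | Sum.inl a => σ (Sum.inl a) + 1
  | Sum.inr i => Fin.lastCases (motive := fun _ => ℕ) 0 (fun j => σ (Sum.inr j) + 1) i

theorem liftN_snoc {α : Type} {n : ℕ} (σ : α ⊕ Fin n → ℕ) {K : Type} (x : K) (v : ℕ → K) :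
    (fun i => cons x v (liftN σ (Sum.inr i))) =
      (Fin.snoc (fun i => v (σ (Sum.inr i))) x : Fin (n + 1) → K) := by
  funext i
  refine Fin.lastCases ?_ (fun j => ?_) i
  · simp [liftN, cons]
  · simp [liftN, cons]

theorem genD0 {α : Type} {n : ℕ} {φ : lang.BoundedFormula α n} (h : IsDelta0 n φ) :
    ∀ σ : α ⊕ Fin n → ℕ, D0 (fun _ _ v =>
      φ.Realize (fun a => v (σ (Sum.inl a))) (fun i => v (σ (Sum.inr i)))) := by
  induction h with
  | falsum n => intro σ; exact D0.falsum
  | equal n t u =>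
    intro σ
    refine (D0.eq (TT.ofTerm t σ) (TT.ofTerm u σ)).congr fun K _ v => ?_
    simp only [BoundedFormula.Realize, elim_split]
  | rel n l R ts =>
    intro σ
    cases R
    refine (D0.lt (TT.ofTerm (ts 0) σ) (TT.ofTerm (ts 1) σ)).congr fun K _ v => ?_
    simp only [BoundedFormula.Realize, elim_split]
    show Structure.RelMap (L := lang) Rel.lt _ ↔ Structure.RelMap (L := lang) Rel.lt _
    apply iff_of_eq
    congr 1
    funext i
    refine Fin.cases ?_ (fun i => ?_) i
    · rfl
    · refine Fin.cases ?_ (fun i => i.elim0) i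
      rfl
  | imp n _ _ h1 h2 =>
    intro σ
    exact ((h1 σ).imp (h2 σ)).congr fun K _ v => by rw [BoundedFormula.realize_imp]
  | @bdAll n t φ _ ih =>
    intro σ
    refine (D0.ball (TT.ofTerm t σ) (R := fun K _ x v =>
      φ.Realize (fun a => cons x v (liftN σ (Sum.inl a)))
        (fun i => cons x v (liftN σ (Sum.inr i)))) ?_).congr fun K _ v => ?_
    · exact (ih (liftN σ)).congr fun K _ v => by simp only [cons_eta]
    · rw [BoundedFormula.realize_all]
      refine forall_congr' fun x => ?_
      rw [BoundedFormula.realize_imp]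
      refine imp_congr ?_ ?_
      · show Structure.RelMap (L := lang) Rel.lt _ ↔ Structure.RelMap (L := lang) Rel.lt _
        apply iff_of_eq
        congr 1
        funext i
        refine Fin.cases ?_ (fun i => ?_) i
        · show x = (Fin.snoc (fun i => v (σ (Sum.inr i))) x : Fin (n + 1) → K) (Fin.last n)
          exact (Fin.snoc_last (α := fun _ => K) x _).symm
        · refine Fin.cases ?_ (fun i => i.elim0) i
          refine Eq.trans ?_ (realize_lift1 _ _ _ _ _).symm
          rw [elim_split]
          rfl
      · rw [liftN_snoc]
        rfl

mutual
theorem genS {α : Type} {m n : ℕ} {φ : lang.BoundedFormula α n} (h : SigmaFm m n φ) :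
    ∀ σ : α ⊕ Fin n → ℕ, NS m (fun _ _ v =>
      φ.Realize (fun a => v (σ (Sum.inl a))) (fun i => v (σ (Sum.inr i)))) := by
  match h with
  | .delta0 m n h => intro σ; exact NS.ofD0 (genD0 h σ)
  | .ofPi m n h => intro σ; exact (genP h σ).toS
  | @SigmaFm.ex _ m n φ h =>
    intro σ
    refine (NS.ex (R := fun K _ x v =>
      φ.Realize (fun a => cons x v (liftN σ (Sum.inl a)))
        (fun i => cons x v (liftN σ (Sum.inr i)))) ?_).congr fun K _ _ v => ?_
    · exact (genS h (liftN σ)).congr fun K _ _ v => by simp only [cons_eta]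
    · rw [BoundedFormula.realize_ex]
      refine exists_congr fun x => ?_
      rw [liftN_snoc]
      rfl
theorem genP {α : Type} {m n : ℕ} {φ : lang.BoundedFormula α n} (h : PiFm m n φ) :
    ∀ σ : α ⊕ Fin n → ℕ, NP m (fun _ _ v =>
      φ.Realize (fun a => v (σ (Sum.inl a))) (fun i => v (σ (Sum.inr i)))) := by
  match h with
  | .delta0 m n h => intro σ; exact NP.ofD0 (genD0 h σ)
  | .ofSigma m n h => intro σ; exact (genS h σ).toP
  | @PiFm.all _ m n φ h =>
    intro σ
    refine (NP.all (R := fun K _ x v =>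
      φ.Realize (fun a => cons x v (liftN σ (Sum.inl a)))
        (fun i => cons x v (liftN σ (Sum.inr i)))) ?_).congr fun K _ _ v => ?_
    · exact (genP h (liftN σ)).congr fun K _ _ v => by simp only [cons_eta]
    · rw [BoundedFormula.realize_all]
      refine forall_congr' fun x => ?_
      rw [liftN_snoc]
      rfl
end

/-! ### From semantic classes to formulas -/

theorem outBoth (m : ℕ) : ∀ {R : Pr}, NS m R → ∀ (α : Type) (n : ℕ)
    (σ : ℕ → lang.Term (α ⊕ Fin n)),
    (∃ φ : lang.BoundedFormula α n, SigmaFm m n φ ∧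
      ∀ (K : Type) [lang.Structure K], PAm K → ∀ (v : α → K) (xs : Fin n → K),
        (φ.Realize v xs ↔ R K (fun i => (σ i).realize (Sum.elim v xs)))) ∧
    (∃ φ : lang.BoundedFormula α n, PiFm m n φ ∧
      ∀ (K : Type) [lang.Structure K], PAm K → ∀ (v : α → K) (xs : Fin n → K),
        (φ.Realize v xs ↔ ¬ R K (fun i => (σ i).realize (Sum.elim v xs)))) := by
  induction m with
  | zero =>
    rintro R ⟨Q, h1, h2⟩ α n σ
    obtain ⟨φ, h3, h4⟩ := h1 α n σ
    obtain ⟨φ', h3', h4'⟩ := h1.not α n σ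
    refine ⟨⟨φ, SigmaFm.delta0 _ _ h3, fun K _ hK v xs => ?_⟩,
      ⟨φ', PiFm.delta0 _ _ h3', fun K _ hK v xs => ?_⟩⟩
    · rw [h4, h2 K hK]
    · rw [h4', h2 K hK]
  | succ m ih =>
    rintro R ⟨Q, h1, h2⟩ α n σ
    obtain ⟨⟨φ, h3, h4⟩, ⟨φ', h3', h4'⟩⟩ := ih h1 α (n + 1) (liftS σ)
    refine ⟨⟨φ'.ex, SigmaFm.ex _ _ (SigmaFm.ofPi _ _ h3'), fun K _ hK v xs => ?_⟩,
      ⟨φ.all, PiFm.all _ _ (PiFm.ofSigma _ _ h3), fun K _ hK v xs => ?_⟩⟩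
    · rw [h2 K hK, BoundedFormula.realize_ex]
      refine exists_congr fun x => ?_
      rw [h4' K hK, realize_liftS]
    · rw [h2 K hK, BoundedFormula.realize_all, not_exists]
      refine forall_congr' fun x => ?_
      rw [h4 K hK, realize_liftS, not_not]

/-- Assignment given by a list, padded by zero. -/
def ctx {K : Type} [lang.Structure K] : List K → ℕ → K
  | [] => fun _ => 0
  | x :: l => cons x (ctx l)

/-- Variables numbered by the positions of a list. -/
noncomputable def listVar {β : Type} : {p : ℕ} → (Fin p → β) → ℕ → lang.Term β
  | 0, _ => fun _ => Term.func (L := lang) (l := 0) Func.zero ![]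
  | _ + 1, f => fun i => match i with
    | 0 => Term.var (f 0)
    | i + 1 => listVar (fun j => f j.succ) i

theorem listVar_realize {β : Type} {K : Type} [lang.Structure K] (l : List K) :
    ∀ (f : Fin l.length → β) (w : β → K), (∀ i, w (f i) = l.get i) →
      (fun i => (listVar f i).realize w) = ctx l := by
  induction l with
  | nil =>
    intro f w _
    funext i
    show Structure.funMap (L := lang) Func.zero _ = Structure.funMap (L := lang) Func.zero ![]
    congr 1
    funext i; exact i.elim0
  | cons x l ih =>
    intro f w h
    funext i
    cases i with
    | zero => exact h 0
    | succ i =>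
      exact congrFun (ih (fun j => f j.succ) w (fun j => h j.succ)) i

/-- Uniformly Σ_m predicates define Σ_m-definable binary relations. -/
theorem sigmaDef2_of {m : ℕ} {R : Pr} (hR : NS m R) {K : Type} [lang.Structure K] (hK : PAm K)
    (l : List K) : SigmaDef2 m K (fun x y => R K (ctx (x :: y :: l))) := by
  obtain ⟨φ, h1, h2⟩ := (outBoth m hR (Fin 2 ⊕ Fin l.length) 0 (fun i => match i with
    | 0 => Term.var (Sum.inl (Sum.inl 0))
    | 1 => Term.var (Sum.inl (Sum.inl 1))
    | i + 2 => listVar (fun j => Sum.inl (Sum.inr j)) i)).1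
  refine ⟨l.length, φ, l.get, h1, fun v => ?_⟩
  rw [h2 K hK]
  apply iff_of_eq
  show R K _ = R K _
  congr 1
  funext i
  match i with
  | 0 => rfl
  | 1 => rfl
  | i + 2 => exact (congrFun (listVar_realize l (fun j => Sum.inl (Sum.inr j))
      (Sum.elim (Sum.elim v l.get) finZeroElim) (fun j => rfl)) i).symm

/-- Uniformly Σ_m predicates define Σ_m-definable sets. -/
theorem sigmaDef1_of {m : ℕ} {R : Pr} (hR : NS m R) {K : Type} [lang.Structure K] (hK : PAm K)
    (l : List K) : SigmaDef1 m K {x | R K (ctx (x :: l))} := by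
  obtain ⟨φ, h1, h2⟩ := (outBoth m hR (Fin 1 ⊕ Fin l.length) 0 (fun i => match i with
    | 0 => Term.var (Sum.inl (Sum.inl 0))
    | i + 1 => listVar (fun j => Sum.inl (Sum.inr j)) i)).1
  refine ⟨l.length, φ, l.get, h1, fun v => ?_⟩
  rw [h2 K hK]
  apply iff_of_eq
  show R K _ = R K _
  congr 1
  funext i
  match i with
  | 0 => rfl
  | i + 1 => exact (congrFun (listVar_realize l (fun j => Sum.inl (Sum.inr j))
      (Sum.elim (Sum.elim v l.get) finZeroElim) (fun j => rfl)) i).symm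

/-- Σ_m-definable binary relations come from uniformly Σ_m predicates. -/
theorem of_sigmaDef2 {m : ℕ} {K : Type} [lang.Structure K] {F : K → K → Prop}
    (h : SigmaDef2 m K F) :
    ∃ (R : Pr) (l : List K), NS m R ∧ ∀ x y, F x y ↔ R K (ctx (x :: y :: l)) := by
  obtain ⟨p, φ, w, h1, h2⟩ := h
  have h3 := genS h1 (fun b => match b with
    | Sum.inl (Sum.inl i) => i.val
    | Sum.inl (Sum.inr i) => i.val + 2
    | Sum.inr i => i.elim0)
  refine ⟨_, List.ofFn w, h3, fun x y => ?_⟩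
  have h4 := h2 ![x, y]
  simp only [Matrix.cons_val_zero, Matrix.cons_val_one] at h4
  rw [h4]
  apply iff_of_eq
  have key : ∀ (l : List K) (i : ℕ) (hi : i < l.length), ctx l i = l.get ⟨i, hi⟩ := by
    intro l
    induction l with
    | nil => intro i hi; exact absurd hi (Nat.not_lt_zero i)
    | cons z l ih =>
      intro i hi
      cases i with
      | zero => rfl
      | succ i => exact ih i (Nat.lt_of_succ_lt_succ hi)
  congr 1
  · funext b
    rcases b with i | i
    · refine Fin.cases ?_ (fun i => ?_) i
      · rfl
      · refine Fin.cases ?_ (fun i => i.elim0) i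
        rfl
    · show w i = ctx (List.ofFn w) i.val
      rw [key _ _ (by simp)]
      simp
  · funext i; exact i.elim0

end ArithFC

namespace ArithFC

/-! ### More arithmetic in models of PA⁻ -/

section Alg2

variable {K : Type} [CommSemiring K] [LinearOrder K] [IsStrictOrderedRing K] [ArP K]

theorem alg_mod_pos {e : K} (j d : K) (he : 0 < e) : 0 < (j + 1) * e + d := by
  have h1 : (0 : K) < j + 1 := by grind [ArP.nonneg j, zero_lt_one (α := K)]
  have h2 := mul_pos h1 he
  grind [ArP.nonneg d]

theorem alg_lt_mul_mod {e q : K} (w : K) (he : 0 < e) (hq : 0 < q) : q < q * ((w + 1) * e + 1) := by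
  have h1 : (0 : K) < w + 1 := by grind [ArP.nonneg w, zero_lt_one (α := K)]
  have h2 := mul_pos hq (mul_pos h1 he)
  have h3 : q * ((w + 1) * e + 1) = q * ((w + 1) * e) + q := by ring
  rw [h3]
  grind

theorem alg_idx_lt {w y b B : K} (hw : w < b) (hy : y < B) : w * B + y < b * B := by
  obtain ⟨d, rfl⟩ := ArP.sub_ex w b hw.le
  have hd : 0 < d := by grind
  have h1 := alg_le_mul B hd
  have h2 : (w + d) * B = w * B + B * d := by ring
  rw [h2]
  grind

theorem alg_idx_le {w y B : K} (hy : y < B) : w ≤ w * B + y ∧ y ≤ w * B + y := by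
  have h0 : 0 < B := lt_of_le_of_lt (ArP.nonneg y) hy
  have h1 := alg_le_mul w h0
  have h2 := ArP.nonneg y
  have h3 := ArP.nonneg w
  constructor <;> grind

theorem alg_mul_pos_left {q m : K} (h : 0 < q * m) : 0 < q := by
  rcases (ArP.nonneg q).eq_or_lt with h' | h'
  · rw [← h', zero_mul] at h
    exact absurd h (lt_irrefl _)
  · exact h'

theorem alg_mul_pos {q m : K} (h : 0 < q) (h' : 0 < m) : 0 < q * m := mul_pos h h'

end Alg2

variable {K : Type} [lang.Structure K]

theorem PAm.mod_pos (h : PAm K) {e : K} (j d : K) (he : 0 < e) : 0 < (j + 1) * e + d :=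
  @alg_mod_pos K h.cs h.lo h.sor h.arp e j d he

theorem PAm.lt_mul_mod (h : PAm K) {e q : K} (w : K) (he : 0 < e) (hq : 0 < q) :
    q < q * ((w + 1) * e + 1) :=
  @alg_lt_mul_mod K h.cs h.lo h.sor h.arp e q w he hq

theorem PAm.idx_lt (h : PAm K) {w y b B : K} (hw : w < b) (hy : y < B) : w * B + y < b * B :=
  @alg_idx_lt K h.cs h.lo h.sor h.arp w y b B hw hy

theorem PAm.idx_le (h : PAm K) {w y B : K} (hy : y < B) : w ≤ w * B + y ∧ y ≤ w * B + y :=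
  @alg_idx_le K h.cs h.lo h.sor h.arp w y B hy

theorem PAm.mul_pos_left (h : PAm K) {q m : K} (hh : 0 < q * m) : 0 < q :=
  @alg_mul_pos_left K h.cs h.lo h.sor h.arp q m hh

theorem PAm.mul_pos' (h : PAm K) {q m : K} (h1 : 0 < q) (h2 : 0 < m) : 0 < q * m :=
  @alg_mul_pos K h.cs h.lo h.sor h.arp q m h1 h2

theorem PAm.not_lt_zero (h : PAm K) (x : K) : ¬ x < 0 := by
  intro hx
  rcases h.zero_le x with h1 | h1
  · exact h.lt_irrefl _ (h.lt_trans _ _ _ hx h1)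
  · rw [← h1] at hx; exact h.lt_irrefl _ hx

theorem PAm.lt_of_lt_of_le' (h : PAm K) {x y z : K} (h1 : x < y) (h2 : y ≤ z) : x < z := by
  rcases h2 with h2 | rfl
  · exact h.lt_trans _ _ _ h1 h2
  · exact h1

theorem PAm.le_refl' (x : K) : x ≤ x := Or.inr rfl

theorem PAm.lt_succ_self (h : PAm K) (x : K) : x < x + 1 := (h.lt_succ x x).2 (Or.inr rfl)

theorem TT.shift {t : Tm} (ht : TT t) : TT (fun K _ v => t K (fun i => v (i + 1))) :=
  ht.subst (σ := fun j _ _ v => v (j + 1)) fun j => TT.var (j + 1)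

/-- The modulus of index `i` divides `r`. -/
def dv (e i r : K) : Prop := ∃ q, q < r + 1 ∧ r = q * ((i + 1) * e + 1)

theorem D0.dv {e i r : Tm} (he : TT e) (hi : TT i) (hr : TT r) :
    D0 (fun K _ v => dv (e K v) (i K v) (r K v)) :=
  D0.bex (hr.add TT.one) (D0.eq hr.shift
    ((TT.var 0).mul (((hi.shift.add TT.one).mul he.shift).add TT.one)))

/-! ### Induction, least number principle, comprehension and collection -/

section Ind

variable {M : Type} [lang.Structure M] {n : ℕ} (hPA : PAm M) (hI : ISig n M)

theorem ind (hPA : PAm M) (hI : ISig n M) {R : Pr} (hR : NS n R) (l : List M)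
    (h0 : R M (ctx (0 :: l)))
    (hs : ∀ x, R M (ctx (x :: l)) → R M (ctx ((x + 1) :: l))) : ∀ x, R M (ctx (x :: l)) :=
  hI _ (sigmaDef1_of hR hPA l) h0 hs

theorem common_multiple (hPA : PAm M) (hI : ISig n M) (hn : 1 ≤ n) {e : M} (he : 0 < e) (d b : M) :
    ∃ r, 0 < r ∧ ∀ j, j < b → ∃ q, q < r + 1 ∧ r = q * ((j + 1) * e + d) := by
  have hR : NS 1 (fun K _ v => ∃ r, 0 < r ∧ ∀ j, j < v 0 →
      ∃ q, q < r + 1 ∧ r = q * ((j + 1) * v 1 + v 2)) := by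
    refine NS.ex (NS.ofD0 ?_)
    refine (D0.lt TT.zero (TT.var 0)).and ?_
    refine D0.ball (TT.var 1) ?_
    refine D0.bex ((TT.var 1).add TT.one) ?_
    exact D0.eq (TT.var 2) ((TT.var 0).mul ((((TT.var 1).add TT.one).mul (TT.var 4)).add (TT.var 5)))
  refine ind hPA hI (hR.mono hn) [e, d] ?_ ?_ b
  · refine ⟨1, hPA.zero_lt_one, fun j hj => (hPA.not_lt_zero j hj).elim⟩
  · rintro x ⟨r, hr, h⟩
    have hx : 0 < (x + 1) * e + d := hPA.mod_pos x d he
    refine ⟨r * ((x + 1) * e + d), hPA.mul_pos' hr hx, fun j hj => ?_⟩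
    have hj' : j < x + 1 := hj
    have bd : ∀ q m : M, 0 < m → q < q * m + 1 := fun q m hm =>
      (hPA.lt_succ _ _).2 (hPA.le_mul q hm)
    rcases (hPA.lt_succ _ _).1 hj' with hlt | rfl
    · obtain ⟨q, _, hq⟩ := h j hlt
      have hq' : r = q * ((j + 1) * e + d) := hq
      refine ⟨q * ((x + 1) * e + d), ?_, ?_⟩
      · have h3 : r * ((x + 1) * e + d) = q * ((x + 1) * e + d) * ((j + 1) * e + d) := by
          rw [hq', hPA.mul_assoc, hPA.mul_assoc, hPA.mul_comm ((j + 1) * e + d)]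
        rw [h3]
        exact bd _ _ (hPA.mod_pos j d he)
      · show r * ((x + 1) * e + d) = q * ((x + 1) * e + d) * ((j + 1) * e + d)
        rw [hq', hPA.mul_assoc, hPA.mul_assoc, hPA.mul_comm ((j + 1) * e + d)]
    · exact ⟨r, bd _ _ hx, rfl⟩

/-- Least number principle for Π_k. -/
def LNP (k : ℕ) (M : Type) [lang.Structure M] : Prop :=
  ∀ R : Pr, NP k R → ∀ (l : List M) (x : M), R M (ctx (x :: l)) →
    ∃ x0, R M (ctx (x0 :: l)) ∧ ∀ y, y < x0 → ¬ R M (ctx (y :: l))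

theorem comprehension (hPA : PAm M) (hI : ISig n M) (hn : 1 ≤ n) {k : ℕ} (hL : LNP k M)
    {R : Pr} (hR : NS k R) (l : List M) (b : M) :
    ∃ e r : M, ∀ w, w < b → (R M (ctx (w :: l)) ↔ dv e w r) := by
  obtain ⟨e, he, he'⟩ := common_multiple hPA hI hn hPA.zero_lt_one 0 b
  obtain ⟨r0, hr0, hr0'⟩ := common_multiple hPA hI hn he 1 b
  have hP : NP k (fun K _ v => 0 < v 0 ∧ ∀ w, w < v 2 →
      (R K (cons w (fun i => v (i + 3))) → dv (v 1) w (v 0))) := by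
    refine (NP.ofD0 (D0.lt TT.zero (TT.var 0))).and ?_
    refine NP.ball (TT.var 2) ?_
    refine NP.imp ?_ (NP.ofD0 (D0.dv (TT.var 2) (TT.var 0) (TT.var 1)))
    refine hR.subst (σ := fun i K _ v => cons (v 0) (fun i => v (i + 4)) i) ?_
    rintro (_ | i)
    · exact TT.var 0
    · exact TT.var (i + 4)
  obtain ⟨r, ⟨hr, h1⟩, h2⟩ := hL _ hP (e :: b :: l) r0 ⟨hr0, fun w hw _ => hr0' w hw⟩
  refine ⟨e, r, fun w hw => ⟨fun h => h1 w hw h, ?_⟩⟩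
  rintro ⟨q, _, hq⟩
  by_contra hnR
  have hr' : 0 < r := hr
  have hq0 : 0 < q := by rw [hq] at hr'; exact hPA.mul_pos_left hr'
  have hqr : q < r := by rw [hq]; exact hPA.lt_mul_mod w he hq0
  refine h2 q hqr ⟨hq0, fun w' hw' hRw' => ?_⟩
  have hw'b : w' < b := hw'
  have hRw : R M (ctx (w' :: l)) := hRw'
  obtain ⟨p, _, hp⟩ : dv e w' r := h1 w' hw'b hRw
  have hne : w' ≠ w := by
    rintro rfl
    exact hnR hRw
  obtain ⟨s, hs⟩ := hPA.coprime (e := e) (i := w') (j := w) (b := b) (x := q)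
    (fun k hk => by
      obtain ⟨q, _, hq⟩ := he' k hk
      rw [hPA.mul_one, hPA.add_zero] at hq
      exact ⟨q, hq⟩) hw'b hw hne ⟨p, by rw [hPA.mul_comm, ← hq, hp]⟩
  refine ⟨s, ?_, hs⟩
  show s < q + 1
  rw [hs]
  exact (hPA.lt_succ _ _).2 (hPA.le_mul s (hPA.mod_pos w' 1 he))

/-- Coding of the section of a Π_k relation. -/
theorem code_rel (hPA : PAm M) (hI : ISig n M) (hn : 1 ≤ n) {k : ℕ} (hL : LNP k M)
    {P : Pr} (hP : NP k P) (l : List M) (b B : M) :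
    ∃ e t : M, ∀ w, w < b → ∀ y, y < B →
      (P M (ctx (y :: w :: l)) ↔ ¬ dv e (w * B + y) t) := by
  have hR : NS k (fun K _ v => ∃ w, w < v 0 + 1 ∧ ∃ y, y < v 0 + 1 ∧
      ((v 0 = w * v 1 + y ∧ y < v 1) ∧ ¬ P K (cons y (cons w (fun i => v (i + 2)))))) := by
    refine NS.bex ((TT.var 0).add TT.one) ?_
    refine NS.bex ((TT.var 1).add TT.one) ?_
    refine NS.and (NS.ofD0 (D0.and ?_ ?_)) ?_
    · exact D0.eq (TT.var 2) (((TT.var 1).mul (TT.var 3)).add (TT.var 0))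
    · exact D0.lt (TT.var 0) (TT.var 3)
    · refine NS.subst hP (σ := fun i K _ v => cons (v 0) (cons (v 1) (fun i => v (i + 4))) i) ?_
      rintro (_ | _ | i)
      · exact TT.var 0
      · exact TT.var 1
      · exact TT.var (i + 4)
  obtain ⟨e, t, h⟩ := comprehension hPA hI hn hL hR (B :: l) (b * B)
  refine ⟨e, t, fun w hw y hy => ?_⟩
  rw [← h _ (hPA.idx_lt hw hy)]
  have hle := hPA.idx_le (w := w) hy
  constructor
  · rintro h1 ⟨w', _, y', _, ⟨h2, h3⟩, h4⟩
    obtain ⟨rfl, rfl⟩ := hPA.divmod hy h3 h2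
    exact h4 h1
  · intro h1
    by_contra h2
    exact h1 ⟨w, (hPA.lt_succ _ _).2 hle.1, y, (hPA.lt_succ _ _).2 hle.2, ⟨rfl, hy⟩, h2⟩

/-- The coded form of bounded quantification. -/
def cb (P : Pr) (K : Type) [lang.Structure K] (u : K) (v : ℕ → K) : Prop :=
  ∃ B e t : K, (∀ w, w < u → ∃ y, y < B ∧ ¬ dv e (w * B + y) t) ∧
    (∀ w, w < u → ∀ y, y < B → (¬ dv e (w * B + y) t → P K (cons y (cons w v))))

theorem cb_iff (hPA : PAm M) (hI : ISig n M) (hn : 1 ≤ n) {k : ℕ} (hL : LNP k M)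
    {P : Pr} (hP : NP k P) (l : List M) (u : M) :
    cb P M u (ctx l) ↔ ∃ B, ∀ w, w < u → ∃ y, y < B ∧ P M (ctx (y :: w :: l)) := by
  constructor
  · rintro ⟨B, e, t, h1, h2⟩
    refine ⟨B, fun w hw => ?_⟩
    obtain ⟨y, hy, hd⟩ := h1 w hw
    exact ⟨y, hy, h2 w hw y hy hd⟩
  · rintro ⟨B, h⟩
    obtain ⟨e, t, het⟩ := code_rel hPA hI hn hL hP l u B
    refine ⟨B, e, t, fun w hw => ?_, fun w hw y hy hd => (het w hw y hy).2 hd⟩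
    obtain ⟨y, hy, hp⟩ := h w hw
    exact ⟨y, hy, (het w hw y hy).1 hp⟩

theorem cb_def {k : ℕ} {P : Pr} (hP : NP k P) :
    NS (k + 1) (fun K _ v => cb P K (v 0) (fun i => v (i + 1))) := by
  refine NS.ex (NS.ex (NS.ex (NP.toS (NP.and (NP.ofD0 ?_) ?_))))
  · refine D0.ball (TT.var 3) (D0.bex (TT.var 3) (D0.not (D0.dv (TT.var 3) ?_ (TT.var 2))))
    exact ((TT.var 1).mul (TT.var 4)).add (TT.var 0)
  · refine NP.ball (TT.var 3) (NP.ball (TT.var 3) (NP.imp (NS.ofD0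
      (D0.not (D0.dv (TT.var 3) ?_ (TT.var 2)))) ?_))
    · exact ((TT.var 1).mul (TT.var 4)).add (TT.var 0)
    · refine hP.subst (σ := fun i K _ v => cons (v 0) (cons (v 1) (fun i => v (i + 6))) i) ?_
      rintro (_ | _ | i)
      · exact TT.var 0
      · exact TT.var 1
      · exact TT.var (i + 6)

theorem PAm.ub (h : PAm K) (x y : K) : ∃ z, x ≤ z ∧ y < z := by
  rcases h.lt_total x y with h1 | h1 | h1
  · exact ⟨y + 1, Or.inl (h.lt_trans _ _ _ h1 (h.lt_succ_self y)), h.lt_succ_self y⟩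
  · exact ⟨y + 1, h1 ▸ Or.inl (h.lt_succ_self x), h.lt_succ_self y⟩
  · exact ⟨x, Or.inr rfl, h1⟩

theorem collection (hPA : PAm M) (hI : ISig n M) {k : ℕ} (hkn : k + 1 ≤ n) (hL : LNP k M)
    {P : Pr} (hP : NP k P) (l : List M) (b : M) (h : ∀ w, w < b → ∃ y, P M (ctx (y :: w :: l))) :
    ∃ B, ∀ w, w < b → ∃ y, y < B ∧ P M (ctx (y :: w :: l)) := by
  have hn : 1 ≤ n := by omega
  have hR : NS (k + 1) (fun K _ v => ¬ (v 0 ≤ v 1) ∨ cb P K (v 0) (fun i => v (i + 2))) := by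
    refine NS.or (NS.ofD0 (D0.not (D0.le (TT.var 0) (TT.var 1)))) ?_
    refine (cb_def hP).subst (σ := fun i K _ v => cons (v 0) (fun i => v (i + 2)) i) ?_
    rintro (_ | i)
    · exact TT.var 0
    · exact TT.var (i + 2)
  have key := ind hPA hI (hR.mono hkn) (b :: l) ?_ ?_ b
  · rcases key with h1 | h1
    · exact absurd (Or.inr rfl) h1
    · exact (cb_iff hPA hI hn hL hP l b).1 h1
  · refine Or.inr ((cb_iff hPA hI hn hL hP l 0).2 ⟨0, fun w hw => (hPA.not_lt_zero w hw).elim⟩)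
  · intro x hx
    by_cases hxb : x + 1 ≤ b
    · right
      have hxb' : x < b := hPA.lt_of_lt_of_le' (hPA.lt_succ_self x) hxb
      rcases hx with hx | hx
      · exact absurd (Or.inl hxb') hx
      · obtain ⟨B, hB⟩ := (cb_iff hPA hI hn hL hP l x).1 hx
        obtain ⟨y, hy⟩ := h x hxb'
        obtain ⟨B', hB', hyB'⟩ := hPA.ub B y
        refine (cb_iff hPA hI hn hL hP l (x + 1)).2 ⟨B', fun w hw => ?_⟩
        rcases (hPA.lt_succ _ _).1 hw with hlt | rfl
        · obtain ⟨y', hy', hp⟩ := hB w hlt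
          exact ⟨y', hPA.lt_of_lt_of_le' hy' hB', hp⟩
        · exact ⟨y, hyB', hy⟩
    · exact Or.inl hxb

theorem lnp_zero (hPA : PAm M) (hI : ISig n M) : LNP 0 M := by
  rintro R ⟨Q, h1, h2⟩ l x hx
  by_contra hno
  push Not at hno
  have hR : NS 0 (fun K _ v => ∀ w, w < v 0 → Q K (cons w (fun i => v (i + 1)))) := by
    refine NS.ofD0 (D0.ball (TT.var 0) ?_)
    refine h1.subst (σ := fun i K _ v => cons (v 0) (fun i => v (i + 2)) i) ?_
    rintro (_ | i)
    · exact TT.var 0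
    · exact TT.var (i + 2)
  have key := ind hPA hI (hR.mono (Nat.zero_le n)) l
    (fun w hw => (hPA.not_lt_zero w hw).elim) ?_ (x + 1)
  · exact (h2 M hPA _).2 (key x (hPA.lt_succ_self x)) hx
  · intro u hu w hw
    rcases (hPA.lt_succ _ _).1 hw with hlt | rfl
    · exact hu w hlt
    · refine (h2 M hPA (ctx (w :: l))).1 fun hRw => ?_
      obtain ⟨y, hy, hRy⟩ := hno w hRw
      exact (h2 M hPA (ctx (y :: l))).2 (hu y hy) hRy

theorem lnp (hPA : PAm M) (hI : ISig n M) (k : ℕ) (hk : k ≤ n) : LNP k M := by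
  induction k with
  | zero => exact lnp_zero hPA hI
  | succ k ih =>
    have hL := ih (by omega)
    have hn : 1 ≤ n := by omega
    rintro R ⟨Q, h1, h2⟩ l x hx
    by_contra hno
    push Not at hno
    have hP : NP k (fun K _ v => ¬ Q K v) := h1.not
    have key := ind hPA hI ((cb_def hP).mono hk) l ?_ ?_ (x + 1)
    · obtain ⟨B, hB⟩ := (cb_iff hPA hI hn hL hP l (x + 1)).1 key
      obtain ⟨y, _, hy⟩ := hB x (hPA.lt_succ_self x)
      exact (h2 M hPA (ctx (x :: l))).2 ⟨y, hy⟩ hx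
    · exact (cb_iff hPA hI hn hL hP l 0).2 ⟨0, fun w hw => (hPA.not_lt_zero w hw).elim⟩
    · intro u hu
      obtain ⟨B, hB⟩ := (cb_iff hPA hI hn hL hP l u).1 hu
      refine (cb_iff hPA hI hn hL hP l (u + 1)).2 ?_
      refine collection hPA hI hk hL hP l (u + 1) fun w hw => ?_
      rcases (hPA.lt_succ _ _).1 hw with hlt | rfl
      · obtain ⟨y, _, hy⟩ := hB w hlt
        exact ⟨y, hy⟩
      · refine (h2 M hPA (ctx (w :: l))).1 fun hRw => ?_
        obtain ⟨z, hz, hRz⟩ := hno w hRw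
        obtain ⟨y, _, hy⟩ := hB z hz
        exact (h2 M hPA (ctx (z :: l))).2 ⟨y, hy⟩ hRz

/-- Coded strong collection. -/
theorem strong_coll (hPA : PAm M) {k : ℕ} (hI : ISig (k + 1) M) {P : Pr} (hP : NP k P)
    (l : List M) (b : M) :
    ∃ B e t : M, (∀ w, w < b → ∀ y, (P M (ctx (y :: w :: l)) →
        ∃ y', y' < B ∧ ¬ dv e (w * B + y') t)) ∧
      (∀ w, w < b → ∀ y, y < B → (¬ dv e (w * B + y) t → P M (ctx (y :: w :: l)))) := by
  have hn : 1 ≤ k + 1 := by omega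
  have hL := lnp hPA hI k (by omega)
  have hL' := lnp hPA hI (k + 1) le_rfl
  have hE : NS (k + 1) (fun K _ v => ∃ y, P K (cons y v)) := by
    refine NS.ex (NP.toS ?_)
    exact hP.congr fun K _ _ v => by rw [cons_eta]
  obtain ⟨e0, r, h0⟩ := comprehension hPA hI hn hL' hE l b
  have hP' : NP k (fun K _ v => dv (v 2) (v 1) (v 3) →
      P K (cons (v 0) (cons (v 1) (fun i => v (i + 4))))) := by
    refine NP.imp (NS.ofD0 (D0.dv (TT.var 2) (TT.var 1) (TT.var 3))) ?_
    refine hP.subst (σ := fun i K _ v => cons (v 0) (cons (v 1) (fun i => v (i + 4))) i) ?_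
    rintro (_ | _ | i)
    · exact TT.var 0
    · exact TT.var 1
    · exact TT.var (i + 4)
  obtain ⟨B, hB⟩ := collection hPA hI le_rfl hL hP' (e0 :: r :: l) b (fun w hw => by
    by_cases hd : dv e0 w r
    · obtain ⟨y, hy⟩ := (h0 w hw).2 hd
      exact ⟨y, fun _ => hy⟩
    · exact ⟨0, fun h => (hd h).elim⟩)
  obtain ⟨e, t, het⟩ := code_rel hPA hI hn hL hP l b B
  refine ⟨B, e, t, fun w hw y hy => ?_, fun w hw y hy hd => (het w hw y hy).2 hd⟩
  obtain ⟨y', hy', hp⟩ := hB w hw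
  exact ⟨y', hy', (het w hw y' hy').1 (hp ((h0 w hw).1 ⟨y, hy⟩))⟩

end Ind

end ArithFC

namespace ArithFC

/-! ### Transfer between `M` and `N` -/

theorem listVar_realize_map {β : Type} {K K' : Type} [lang.Structure K] [lang.Structure K']
    (g : K → K') (l : List K) :
    ∀ (f : Fin l.length → β) (w : β → K'), (∀ i, w (f i) = g (l.get i)) →
      (fun i => (listVar f i).realize w) = ctx (l.map g) := by
  induction l with
  | nil =>
    intro f w _
    funext i
    show Structure.funMap (L := lang) Func.zero _ = Structure.funMap (L := lang) Func.zero ![]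
    congr 1
    funext i; exact i.elim0
  | cons x l ih =>
    intro f w h
    funext i
    cases i with
    | zero => exact h 0
    | succ i =>
      exact congrFun (ih (fun j => f j.succ) w (fun j => h j.succ)) i

section Transfer

variable {M N : Type} [lang.Structure M] [lang.Structure N] {g : M → N}

theorem xfer {m : ℕ} {R : Pr} (hR : NS m R) (hM : PAm M) (hN : PAm N) (hel : SigmaElem M N m g)
    (l : List M) : R M (ctx l) ↔ R N (ctx (l.map g)) := by
  obtain ⟨φ, h1, h2⟩ := (outBoth m hR (Fin l.length) 0 (listVar (fun j => Sum.inl j))).1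
  have h3 := hel _ φ h1 l.get
  rw [h2 M hM, h2 N hN,
    listVar_realize l (fun j => Sum.inl j) (Sum.elim l.get finZeroElim) (fun j => rfl),
    listVar_realize_map g l (fun j => Sum.inl j) (Sum.elim (g ∘ l.get) finZeroElim)
      (fun j => rfl)] at h3
  exact h3

theorem univ_xfer {m : ℕ} (hel : SigmaElem M N (m + 1) g) {R : Pr} (hR : D0 R)
    (h : ∀ v : ℕ → M, R M v) (x y z : N) : R N (ctx [x, y, z]) := by
  by_contra hc
  obtain ⟨φ, h1, h2⟩ := hR.not (Fin 0) 3
    (liftS (liftS (liftS (listVar (p := 0) (fun j => j.elim0)))))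
  have h4 := hel 0 φ.ex.ex.ex (SigmaFm.ex _ _ (SigmaFm.ex _ _ (SigmaFm.ex _ _
    (SigmaFm.delta0 _ _ h1)))) (fun j => j.elim0)
  simp only [BoundedFormula.realize_ex, h2, realize_liftS] at h4
  have h5 := h4.2 ⟨z, y, x, by
    have := listVar_realize (K := N) [] (fun j : Fin 0 => (j.elim0 : Fin 0 ⊕ Fin 0))
      (Sum.elim (g ∘ fun j : Fin 0 => (j.elim0 : M)) finZeroElim) (fun j => j.elim0)
    erw [this]
    exact hc⟩
  obtain ⟨_, _, _, h6⟩ := h5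
  exact h6 (h _)

theorem pam_xfer {m : ℕ} (hM : PAm M) (hel : SigmaElem M N (m + 1) g) : PAm N where
  add_assoc x y z := univ_xfer hel (R := fun K _ v => v 0 + v 1 + v 2 = v 0 + (v 1 + v 2))
    (D0.eq (((TT.var 0).add (TT.var 1)).add (TT.var 2))
      ((TT.var 0).add ((TT.var 1).add (TT.var 2)))) (fun v => hM.add_assoc _ _ _) x y z
  add_comm x y := univ_xfer hel (R := fun K _ v => v 0 + v 1 = v 1 + v 0)
    (D0.eq ((TT.var 0).add (TT.var 1)) ((TT.var 1).add (TT.var 0)))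
      (fun v => hM.add_comm _ _) x y 0
  mul_assoc x y z := univ_xfer hel (R := fun K _ v => v 0 * v 1 * v 2 = v 0 * (v 1 * v 2))
    (D0.eq (((TT.var 0).mul (TT.var 1)).mul (TT.var 2))
      ((TT.var 0).mul ((TT.var 1).mul (TT.var 2)))) (fun v => hM.mul_assoc _ _ _) x y z
  mul_comm x y := univ_xfer hel (R := fun K _ v => v 0 * v 1 = v 1 * v 0)
    (D0.eq ((TT.var 0).mul (TT.var 1)) ((TT.var 1).mul (TT.var 0)))
      (fun v => hM.mul_comm _ _) x y 0
  ldistrib x y z := univ_xfer hel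
    (R := fun K _ v => v 0 * (v 1 + v 2) = v 0 * v 1 + v 0 * v 2)
    (D0.eq ((TT.var 0).mul ((TT.var 1).add (TT.var 2)))
      (((TT.var 0).mul (TT.var 1)).add ((TT.var 0).mul (TT.var 2))))
      (fun v => hM.ldistrib _ _ _) x y z
  add_zero x := univ_xfer hel (R := fun K _ v => v 0 + 0 = v 0)
    (D0.eq ((TT.var 0).add TT.zero) (TT.var 0)) (fun v => hM.add_zero _) x 0 0
  mul_zero x := univ_xfer hel (R := fun K _ v => v 0 * 0 = 0)
    (D0.eq ((TT.var 0).mul TT.zero) TT.zero) (fun v => hM.mul_zero _) x 0 0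
  mul_one x := univ_xfer hel (R := fun K _ v => v 0 * 1 = v 0)
    (D0.eq ((TT.var 0).mul TT.one) (TT.var 0)) (fun v => hM.mul_one _) x 0 0
  lt_trans x y z := univ_xfer hel (R := fun K _ v => v 0 < v 1 → v 1 < v 2 → v 0 < v 2)
    ((D0.lt (TT.var 0) (TT.var 1)).imp ((D0.lt (TT.var 1) (TT.var 2)).imp
      (D0.lt (TT.var 0) (TT.var 2)))) (fun v => hM.lt_trans _ _ _) x y z
  lt_irrefl x := univ_xfer hel (R := fun K _ v => ¬ v 0 < v 0)
    (D0.lt (TT.var 0) (TT.var 0)).not (fun v => hM.lt_irrefl _) x 0 0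
  lt_total x y := univ_xfer hel (R := fun K _ v => v 0 < v 1 ∨ v 0 = v 1 ∨ v 1 < v 0)
    ((D0.lt (TT.var 0) (TT.var 1)).or ((D0.eq (TT.var 0) (TT.var 1)).or
      (D0.lt (TT.var 1) (TT.var 0)))) (fun v => hM.lt_total _ _) x y 0
  add_lt_add x y z := univ_xfer hel (R := fun K _ v => v 0 < v 1 → v 0 + v 2 < v 1 + v 2)
    ((D0.lt (TT.var 0) (TT.var 1)).imp (D0.lt ((TT.var 0).add (TT.var 2))
      ((TT.var 1).add (TT.var 2)))) (fun v => hM.add_lt_add _ _ _) x y z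
  mul_lt_mul x y z := univ_xfer hel
    (R := fun K _ v => v 0 < v 1 → 0 < v 2 → v 0 * v 2 < v 1 * v 2)
    ((D0.lt (TT.var 0) (TT.var 1)).imp ((D0.lt TT.zero (TT.var 2)).imp
      (D0.lt ((TT.var 0).mul (TT.var 2))
      ((TT.var 1).mul (TT.var 2))))) (fun v => hM.mul_lt_mul _ _ _) x y z
  sub_exists x y hxy := by
    have := univ_xfer hel
      (R := fun K _ v => v 0 < v 1 → ∃ z, z < v 1 + 1 ∧ v 0 + z = v 1)
      ((D0.lt (TT.var 0) (TT.var 1)).imp (D0.bex ((TT.var 1).add TT.one)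
        (D0.eq ((TT.var 1).add (TT.var 0)) (TT.var 2)))) (fun v hv => by
          obtain ⟨z, hz⟩ := hM.sub_exists _ _ hv
          refine ⟨z, ?_, hz⟩
          rw [hM.lt_succ, ← hz]
          rcases hM.zero_le (v 0) with h | h
          · left
            have := hM.add_lt_add _ _ z h
            rwa [hM.add_comm 0 z, hM.add_zero] at this
          · right
            rw [← h, hM.add_comm 0 z, hM.add_zero]) x y 0 hxy
    obtain ⟨z, _, hz⟩ := this
    exact ⟨z, hz⟩
  zero_lt_one := univ_xfer hel (R := fun K _ v => (0 : K) < 1)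
    (D0.lt TT.zero TT.one) (fun v => hM.zero_lt_one) 0 0 0
  discrete x := univ_xfer hel (R := fun K _ v => 0 < v 0 → 1 ≤ v 0)
    ((D0.lt TT.zero (TT.var 0)).imp (D0.le TT.one (TT.var 0))) (fun v => hM.discrete _) x 0 0
  zero_le x := univ_xfer hel (R := fun K _ v => 0 ≤ v 0)
    (D0.le TT.zero (TT.var 0)) (fun v => hM.zero_le _) x 0 0

end Transfer

/-! ### The predicates -/

section Preds

variable {K : Type} [lang.Structure K]

/-- Triples. -/
def tr (z u v : K) : K := pr (pr z u) v

theorem TT.tr {z u v : Tm} (hz : TT z) (hu : TT u) (hv : TT v) :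
    TT (fun K _ x => tr (z K x) (u K x) (v K x)) := (hz.pr hu).pr hv

theorem PAm.tr_inj (h : PAm K) {z u v z' u' v' : K} (hh : tr z u v = tr z' u' v') :
    z = z' ∧ u = u' ∧ v = v' := by
  obtain ⟨h1, h2⟩ := h.pair_inj hh
  obtain ⟨h3, h4⟩ := h.pair_inj h1
  exact ⟨h3, h4, h2⟩

theorem PAm.le_tr (h : PAm K) {x y z : K} (h1 : x ≤ y) (h2 : y ≤ z) : x ≤ z := by
  rcases h1 with h1 | rfl
  · exact Or.inl (h.lt_of_lt_of_le' h1 h2)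
  · exact h2

theorem PAm.tr_lt (h : PAm K) (z u v : K) :
    z < tr z u v + 1 ∧ u < tr z u v + 1 ∧ v < tr z u v + 1 := by
  have h1 := h.pair_le z u
  have h2 := h.pair_le (pr z u) v
  refine ⟨(h.lt_succ _ _).2 (h.le_tr h1.1 h2.1), (h.lt_succ _ _).2 (h.le_tr h1.2 h2.1),
    (h.lt_succ _ _).2 h2.2⟩

/-- Bounded version of `SeqAt`. -/
def SeqD (s i x : K) : Prop := ∃ a, a < s + 1 ∧ ∃ b, b < s + 1 ∧
  (s + s = (a + b) * (a + b + 1) + (b + b) ∧ x < (i + 1) * b + 1 ∧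
    ∃ q, q < a + 1 ∧ a = q * ((i + 1) * b + 1) + x)

theorem D0.seqD {s i x : Tm} (hs : TT s) (hi : TT i) (hx : TT x) :
    D0 (fun K _ v => SeqD (s K v) (i K v) (x K v)) := by
  refine D0.bex (hs.add TT.one) (D0.bex (hs.shift.add TT.one) ?_)
  refine (D0.eq (hs.shift.shift.add hs.shift.shift) ((((TT.var 1).add (TT.var 0)).mul
    (((TT.var 1).add (TT.var 0)).add TT.one)).add ((TT.var 0).add (TT.var 0)))).and ?_
  refine (D0.lt hx.shift.shift
    (((hi.shift.shift.add TT.one).mul (TT.var 0)).add TT.one)).and ?_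
  exact D0.bex ((TT.var 1).add TT.one) (D0.eq (TT.var 2) (((TT.var 0).mul
    (((hi.shift.shift.shift.add TT.one).mul (TT.var 1)).add TT.one)).add hx.shift.shift.shift))

theorem PAm.le_add (h : PAm K) (x y : K) : x ≤ x + y := by
  rcases h.zero_le y with h1 | h1
  · left
    have := h.add_lt_add _ _ x h1
    rwa [h.add_comm 0 x, h.add_zero, h.add_comm y x] at this
  · right
    rw [← h1, h.add_zero]

theorem PAm.seqD_iff (h : PAm K) (s i x : K) : SeqD s i x ↔ SeqAt s i x := by
  constructor
  · rintro ⟨a, _, b, _, h1, h2, q, _, h3⟩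
    exact ⟨a, b, h1, h2, q, h3⟩
  · rintro ⟨a, b, h1, h2, q, h3⟩
    have h4 := h.cpair_le h1
    refine ⟨a, (h.lt_succ _ _).2 h4.1, b, (h.lt_succ _ _).2 h4.2, h1, h2, q, ?_, h3⟩
    rw [h.lt_succ]
    have hpos : 0 < (i + 1) * b + 1 := by
      rcases h.zero_le x with h5 | h5
      · exact h.lt_trans _ _ _ h5 h2
      · rw [h5]; exact h2
    have h6 := h.le_mul q hpos
    refine h.le_tr h6 ?_
    conv_rhs => rw [h3]
    exact h.le_add _ _

theorem PAm.seqD_unique (h : PAm K) {s i x x' : K} (h1 : SeqD s i x) (h2 : SeqD s i x') :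
    x = x' := by
  obtain ⟨a, _, b, _, h3, h4, q, _, h5⟩ := h1
  obtain ⟨a', _, b', _, h3', h4', q', _, h5'⟩ := h2
  obtain ⟨rfl, rfl⟩ := h.cpair_inj (h3.symm.trans h3')
  have hfin := h.divmod h4 h4' (h5.symm.trans h5')
  exact hfin.2

/-- Stage decomposition of the kernel predicate. -/
def Psi (ψ : Pr) (y w : K) (p : ℕ → K) : Prop :=
  ∀ z, z < w + 1 → ∀ u, u < w + 1 → ∀ v, v < w + 1 →
    (w = tr z u v → ψ K (cons y (cons z (cons u (cons v p)))))

theorem NP.psi {k : ℕ} {ψ : Pr} (hψ : NP k ψ) :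
    NP k (fun K _ v => Psi ψ (v 0) (v 1) (fun i => v (i + 2))) := by
  refine NP.ball ((TT.var 1).add TT.one) (NP.ball ((TT.var 2).add TT.one)
    (NP.ball ((TT.var 3).add TT.one) (NP.imp (NS.ofD0 (D0.eq (TT.var 4)
      (TT.tr (TT.var 2) (TT.var 1) (TT.var 0)))) ?_)))
  refine hψ.subst (σ := fun i K _ v =>
    cons (v 3) (cons (v 2) (cons (v 1) (cons (v 0) (fun i => v (i + 5))))) i) ?_
  rintro (_ | _ | _ | _ | i)
  · exact TT.var 3
  · exact TT.var 2
  · exact TT.var 1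
  · exact TT.var 0
  · exact TT.var (i + 5)

theorem PAm.psi_tr (h : PAm K) {ψ : Pr} {y z u v : K} {p : ℕ → K} :
    Psi ψ y (tr z u v) p ↔ ψ K (cons y (cons z (cons u (cons v p)))) := by
  constructor
  · intro hh
    obtain ⟨h1, h2, h3⟩ := h.tr_lt z u v
    exact hh z h1 u h2 v h3 rfl
  · intro hh z' _ u' _ v' _ he
    obtain ⟨rfl, rfl, rfl⟩ := h.tr_inj he
    exact hh

/-- The coded set. -/
def SS (B e t w : K) : Prop := ∃ y, y < B ∧ ¬ dv e (w * B + y) t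

theorem D0.ss {B e t w : Tm} (hB : TT B) (he : TT e) (ht : TT t) (hw : TT w) :
    D0 (fun K _ v => SS (B K v) (e K v) (t K v) (w K v)) :=
  D0.bex hB (D0.dv he.shift ((hw.shift.mul hB.shift).add (TT.var 0)) ht.shift).not

/-- `B, e, t` code the set of `w < b` with a witness. -/
def VV (ψ : Pr) (b B e t : K) (p : ℕ → K) : Prop :=
  (∀ w, w < b → ∀ y, (Psi ψ y w p → SS B e t w)) ∧
  (∀ w, w < b → ∀ y, y < B → (¬ dv e (w * B + y) t → Psi ψ y w p))

theorem NP.vv {k : ℕ} {ψ : Pr} (hψ : NP k ψ) :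
    NP (k + 1) (fun K _ v => VV ψ (v 0) (v 1) (v 2) (v 3) (fun i => v (i + 4))) := by
  have hp := hψ.psi
  have h2 : NP k (fun K _ v => Psi ψ (v 0) (v 1) (fun i => v (i + 6))) := by
    refine hp.subst (σ := fun i K _ v => cons (v 0) (cons (v 1) (fun i => v (i + 6))) i) ?_
    rintro (_ | _ | i)
    · exact TT.var 0
    · exact TT.var 1
    · exact TT.var (i + 6)
  refine NP.and ?_ ?_
  · refine NP.ball (TT.var 0) (NP.all (NP.imp ?_ ?_))
    · exact NP.toS h2
    · exact NP.ofD0 (D0.ss (TT.var 3) (TT.var 4) (TT.var 5) (TT.var 1))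
  · refine NP.ball (TT.var 0) (NP.ball (TT.var 2) (NP.imp ?_ ?_))
    · exact NS.ofD0 (D0.dv (TT.var 4) (((TT.var 1).mul (TT.var 3)).add (TT.var 0)) (TT.var 5)).not
    · exact NP.succ h2

theorem VV.iff {ψ : Pr} {b B e t : K} {p : ℕ → K} (h : VV ψ b B e t p) {w : K} (hw : w < b) :
    SS B e t w ↔ ∃ y, Psi ψ y w p := by
  constructor
  · rintro ⟨y, hy, h1⟩
    exact ⟨y, h.2 w hw y hy h1⟩
  · rintro ⟨y, hy⟩
    exact h.1 w hw y hy

/-- Candidates. -/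
def Cand (c a d B e t w : K) : Prop :=
  ∃ z, z < w + 1 ∧ ∃ u, u < w + 1 ∧ ∃ v, v < w + 1 ∧
    (w = tr z u v ∧ v < a ∧ SeqD u c d ∧ ¬ SS B e t w)

theorem D0.cand {c a d B e t w : Tm} (hc : TT c) (ha : TT a) (hd : TT d) (hB : TT B) (he : TT e)
    (ht : TT t) (hw : TT w) :
    D0 (fun K _ v => Cand (c K v) (a K v) (d K v) (B K v) (e K v) (t K v) (w K v)) := by
  refine D0.bex (hw.add TT.one) (D0.bex (hw.shift.add TT.one)
    (D0.bex (hw.shift.shift.add TT.one) ?_))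
  refine (D0.eq hw.shift.shift.shift (TT.tr (TT.var 2) (TT.var 1) (TT.var 0))).and ?_
  refine (D0.lt (TT.var 0) ha.shift.shift.shift).and ?_
  refine (D0.seqD (TT.var 1) hc.shift.shift.shift hd.shift.shift.shift).and ?_
  exact (D0.ss hB.shift.shift.shift he.shift.shift.shift ht.shift.shift.shift
    hw.shift.shift.shift).not

theorem PAm.cand_tr (h : PAm K) {c a d B e t z u v : K} :
    Cand c a d B e t (tr z u v) ↔ v < a ∧ SeqD u c d ∧ ¬ SS B e t (tr z u v) := by
  constructor
  · rintro ⟨z', _, u', _, v', _, he, h1⟩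
    obtain ⟨rfl, rfl, rfl⟩ := h.tr_inj he
    exact h1
  · intro h1
    obtain ⟨h2, h3, h4⟩ := h.tr_lt z u v
    exact ⟨z, h2, u, h3, v, h4, rfl, h1⟩

/-- The graph of the injection. -/
def GG (ψ : Pr) (d v c a : K) (p : ℕ → K) : Prop :=
  ∃ b, ∃ B, ∃ e, ∃ t, ∃ w, ∃ z, ∃ u, VV ψ b B e t p ∧ w < b ∧ w = tr z u v ∧
    Cand c a d B e t w ∧ ∀ w', w' < w → ¬ Cand c a d B e t w'

theorem NS.gg {k : ℕ} {ψ : Pr} (hψ : NP k ψ) :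
    NS (k + 2) (fun K _ v => GG ψ (v 0) (v 1) (v 2) (v 3) (fun i => v (i + 4))) := by
  refine NS.ex (NS.ex (NS.ex (NS.ex (NS.ex (NS.ex (NS.ex (NS.and ?_ (NS.ofD0 ?_))))))))
  · refine NP.toS (m := k + 1) ?_
    refine hψ.vv.subst (σ := fun i K _ v =>
      cons (v 6) (cons (v 5) (cons (v 4) (cons (v 3) (fun i => v (i + 11))))) i) ?_
    rintro (_ | _ | _ | _ | i)
    · exact TT.var 6
    · exact TT.var 5
    · exact TT.var 4
    · exact TT.var 3
    · exact TT.var (i + 11)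
  · refine (D0.lt (TT.var 2) (TT.var 6)).and ?_
    refine (D0.eq (TT.var 2) (TT.tr (TT.var 1) (TT.var 0) (TT.var 8))).and ?_
    refine (D0.cand (TT.var 9) (TT.var 10) (TT.var 7) (TT.var 5) (TT.var 4) (TT.var 3)
      (TT.var 2)).and ?_
    exact D0.ball (TT.var 2) (D0.cand (TT.var 10) (TT.var 11) (TT.var 8) (TT.var 6) (TT.var 5)
      (TT.var 4) (TT.var 0)).not

end Preds

end ArithFC

namespace ArithFC

section Final

variable {M N : Type} [lang.Structure M] [lang.Structure N] {g : M → N}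

/-- The least candidate exists in `N`. -/
theorem cand_least {k : ℕ} (hM : PAm M) (hN : PAm N) (hI : ISig (k + 1) M)
    (hel : SigmaElem M N (k + 2) g) (c a d B e t w0 : N) (h0 : Cand c a d B e t w0) :
    ∃ w, w ≤ w0 ∧ Cand c a d B e t w ∧ ∀ w', w' < w → ¬ Cand c a d B e t w' := by
  by_contra hc
  have hcl : NS (k + 2) (fun K _ _ => ∃ c : K, ∃ a : K, ∃ d : K, ∃ B : K, ∃ e : K, ∃ t : K,
      ∃ w0 : K, Cand c a d B e t w0 ∧ ∀ w, w < w0 + 1 →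
        ¬ (Cand c a d B e t w ∧ ∀ w', w' < w → ¬ Cand c a d B e t w')) := by
    refine NS.ex (NS.ex (NS.ex (NS.ex (NS.ex (NS.ex (NS.ex (NS.ofD0 ?_)))))))
    refine (D0.cand (TT.var 6) (TT.var 5) (TT.var 4) (TT.var 3) (TT.var 2) (TT.var 1)
      (TT.var 0)).and ?_
    refine D0.ball ((TT.var 0).add TT.one) (D0.not (D0.and ?_ ?_))
    · exact D0.cand (TT.var 7) (TT.var 6) (TT.var 5) (TT.var 4) (TT.var 3) (TT.var 2) (TT.var 0)
    · exact D0.ball (TT.var 0) (D0.cand (TT.var 8) (TT.var 7) (TT.var 6) (TT.var 5) (TT.var 4)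
        (TT.var 3) (TT.var 0)).not
  have h1 := (xfer hcl hM hN hel []).2 ⟨c, a, d, B, e, t, w0, h0, by
    intro w hw hh
    exact hc ⟨w, (hN.lt_succ _ _).1 hw, hh⟩⟩
  obtain ⟨c, a, d, B, e, t, w0, h2, h3⟩ := h1
  have hR : NP 0 (fun K _ v => Cand (v 1) (v 2) (v 3) (v 4) (v 5) (v 6) (v 0)) :=
    NP.ofD0 (D0.cand (TT.var 1) (TT.var 2) (TT.var 3) (TT.var 4) (TT.var 5) (TT.var 6) (TT.var 0))
  obtain ⟨w, h4, h5⟩ := lnp_zero hM hI _ hR [c, a, d, B, e, t] w0 h2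
  refine h3 w ?_ ⟨h4, h5⟩
  rw [hM.lt_succ]
  rcases hM.lt_total w w0 with h | h | h
  · exact Or.inl h
  · exact Or.inr h
  · exact absurd h2 (h5 w0 h)

theorem final {k : ℕ} (hM : PAm M) (hI : ISig (k + 1) M) (a : M)
    (hMinj : SigmaInjWhole M (k + 2) a) (hel : SigmaElem M N (k + 2) g)
    (c : N) (hMc : ∀ z : N, ∃ f : M, SeqAt (g f) c z) :
    SigmaInjWhole N (k + 2) (g a) := by
  have hN : PAm N := pam_xfer (m := k + 1) hM hel
  obtain ⟨F, hF, hF1, hF2, hF3⟩ := hMinj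
  obtain ⟨R, P, hR, hFR⟩ := of_sigmaDef2 hF
  obtain ⟨Q1, hQ1, hRQ⟩ := hR
  obtain ⟨Q2, hQ2, hQQ⟩ := hQ1
  obtain ⟨ψ, hψ, hψQ⟩ : ∃ ψ : Pr, NP k ψ ∧ ∀ (K : Type) [lang.Structure K] (v : ℕ → K),
      ψ K v ↔ ¬ Q2 K v := ⟨fun K _ v => ¬ Q2 K v, hQ2.not, fun _ _ _ => Iff.rfl⟩
  have hFψ : ∀ u v, F u v ↔ ∃ z, ¬ ∃ y, ψ M (cons y (cons z (cons u (cons v (ctx P))))) := by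
    intro u v
    rw [hFR, hRQ M hM]
    refine exists_congr fun z => not_congr ?_
    rw [hQQ M hM]
    exact exists_congr fun y => (hψQ M _).symm
  -- transfer of the order
  have hglt : ∀ x y : M, x < y → g x < g y := by
    intro x y h
    exact (xfer (R := fun K _ v => v 0 < v 1) (NS.ofD0 (D0.lt (TT.var 0) (TT.var 1)))
      hM hN hel [x, y]).1 h
  have hgtr : ∀ z u v : M, g (tr z u v) = tr (g z) (g u) (g v) := by
    intro z u v
    exact (xfer (R := fun K _ x => x 0 = tr (x 1) (x 2) (x 3))
      (NS.ofD0 (D0.eq (TT.var 0) (TT.tr (TT.var 1) (TT.var 2) (TT.var 3))))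
      hM hN hel [tr z u v, z, u, v]).1 rfl
  -- transfer of the kernel
  have hnth : NP (k + 1) (fun K _ x => ¬ ∃ y, ψ K (cons y x)) := by
    refine NS.not (NS.ex (m := k) ?_)
    refine (NP.toS hψ).congr fun K _ _ v => ?_
    rw [cons_eta]
  have hgth : ∀ z u v : M, (¬ ∃ y, ψ M (cons y (cons z (cons u (cons v (ctx P)))))) →
      ¬ ∃ y, ψ N (cons y (cons (g z) (cons (g u) (cons (g v) (ctx (P.map g)))))) := by
    intro z u v h
    exact (xfer (NP.toS hnth) hM hN hel (z :: u :: v :: P)).1 h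
  -- transfer of injectivity
  have hinjN : ∀ z z' u u' v : N,
      (¬ ∃ y, ψ N (cons y (cons z (cons u (cons v (ctx (P.map g))))))) →
      (¬ ∃ y, ψ N (cons y (cons z' (cons u' (cons v (ctx (P.map g))))))) → u = u' := by
    intro z z' u u' v h h'
    by_contra hne
    have hcl : NS (k + 2) (fun K _ x => ∃ z : K, ∃ z' : K, ∃ u : K, ∃ u' : K, ∃ v : K,
        (¬ ∃ y, ψ K (cons y (cons z (cons u (cons v x))))) ∧
        (¬ ∃ y, ψ K (cons y (cons z' (cons u' (cons v x))))) ∧ ¬ u = u') := by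
      refine NS.ex (NS.ex (NS.ex (NS.ex (NS.ex ((NP.toS (m := k + 1) ?_).and
        ((NP.toS (m := k + 1) ?_).and (NS.ofD0 (D0.eq (TT.var 2) (TT.var 1)).not)))))))
      · refine hnth.subst (σ := fun i K _ v =>
          cons (v 4) (cons (v 2) (cons (v 0) (fun i => v (i + 5)))) i) ?_
        rintro (_ | _ | _ | i)
        · exact TT.var 4
        · exact TT.var 2
        · exact TT.var 0
        · exact TT.var (i + 5)
      · refine hnth.subst (σ := fun i K _ v =>
          cons (v 3) (cons (v 1) (cons (v 0) (fun i => v (i + 5)))) i) ?_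
        rintro (_ | _ | _ | i)
        · exact TT.var 3
        · exact TT.var 1
        · exact TT.var 0
        · exact TT.var (i + 5)
    obtain ⟨z, z', u, u', v, h1, h2, h3⟩ :=
      (xfer hcl hM hN hel P).2 ⟨z, z', u, u', v, h, h', hne⟩
    exact h3 (hF3 u u' v ((hFψ u v).2 ⟨z, h1⟩) ((hFψ u' v).2 ⟨z', h2⟩))
  -- least candidates agree
  have hcmp : ∀ (d b B e t b' B' e' t' w w' : N), VV ψ b B e t (ctx (P.map g)) →
      VV ψ b' B' e' t' (ctx (P.map g)) → w < b → w' < b' → Cand c (g a) d B e t w →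
      (∀ x, x < w' → ¬ Cand c (g a) d B' e' t' x) → ¬ w < w' := by
    intro d b B e t b' B' e' t' w w' hV hV' hw hw' hC hmin hlt
    refine hmin w hlt ?_
    obtain ⟨z, hz, u, hu, v, hv, h1, h2, h3, h4⟩ := hC
    refine ⟨z, hz, u, hu, v, hv, h1, h2, h3, ?_⟩
    rw [hV.iff hw] at h4
    rw [hV'.iff (hN.lt_trans _ _ _ hlt hw')]
    exact h4
  refine ⟨fun d v => GG ψ d v c (g a) (ctx (P.map g)), ?_, ?_, ?_, ?_⟩
  · exact sigmaDef2_of (NS.gg hψ) hN (c :: g a :: P.map g)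
  · intro d
    obtain ⟨f, hf⟩ := hMc d
    obtain ⟨v, hva, hFv⟩ := hF1 f
    obtain ⟨z, hz⟩ := (hFψ f v).1 hFv
    obtain ⟨B, e, t, h1, h2⟩ := strong_coll hM hI hψ.psi P (tr z f v + 1)
    have hVM : VV ψ (tr z f v + 1) B e t (ctx P) := ⟨h1, h2⟩
    have hVN : VV ψ (g (tr z f v + 1)) (g B) (g e) (g t) (ctx (P.map g)) :=
      (xfer (NP.toS hψ.vv) hM hN hel ((tr z f v + 1) :: B :: e :: t :: P)).1 hVM
    have hwb : tr (g z) (g f) (g v) < g (tr z f v + 1) := by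
      rw [← hgtr]; exact hglt _ _ (hM.lt_succ_self _)
    have hC : Cand c (g a) d (g B) (g e) (g t) (tr (g z) (g f) (g v)) := by
      rw [hN.cand_tr, hN.seqD_iff, hVN.iff hwb]
      refine ⟨hglt _ _ hva, hf, ?_⟩
      rintro ⟨y, hy⟩
      exact hgth z f v hz ⟨y, hN.psi_tr.1 hy⟩
    obtain ⟨w, hw, hCw, hmin⟩ := cand_least hM hN hI hel _ _ _ _ _ _ _ hC
    have hwb' : w < g (tr z f v + 1) := by
      rcases hw with hw | hw
      · exact hN.lt_trans _ _ _ hw hwb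
      · rw [hw]; exact hwb
    have hCw' := hCw
    obtain ⟨z', _, u', _, v', _, hwe, hv', _⟩ := hCw'
    exact ⟨v', hv', _, _, _, _, w, z', u', hVN, hwb', hwe, hCw, hmin⟩
  · rintro d v v' ⟨b, B, e, t, w, z, u, hV, hwb, hwe, hC, hmin⟩
      ⟨b', B', e', t', w', z', u', hV', hwb', hwe', hC', hmin'⟩
    have h1 := hcmp d b B e t b' B' e' t' w w' hV hV' hwb hwb' hC hmin'
    have h2 := hcmp d b' B' e' t' b B e t w' w hV' hV hwb' hwb hC' hmin
    have h3 : w = w' := by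
      rcases hN.lt_total w w' with h | h | h
      · exact absurd h h1
      · exact h
      · exact absurd h h2
    rw [hwe, hwe'] at h3
    exact (hN.tr_inj h3).2.2
  · rintro d d' v ⟨b, B, e, t, w, z, u, hV, hwb, rfl, hC, -⟩
      ⟨b', B', e', t', w', z', u', hV', hwb', rfl, hC', -⟩
    rw [hN.cand_tr, hV.iff hwb] at hC
    rw [hN.cand_tr, hV'.iff hwb'] at hC'
    have h1 : u = u' := by
      refine hinjN z z' u u' v ?_ ?_
      · rintro ⟨y, hy⟩
        exact hC.2.2 ⟨y, hN.psi_tr.2 hy⟩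
      · rintro ⟨y, hy⟩
        exact hC'.2.2 ⟨y, hN.psi_tr.2 hy⟩
    subst h1
    exact hN.seqD_unique hC.2.1 hC'.2.1

end Final

end ArithFC

namespace ArithFC

/-- Let `M ⊨ PA⁻ + IΣn` (`n ≥ 1`) with a Σ_{n+1}-definable injection
of `M` into `[0,a)`, and let `N = M[c]` (every element of `N` is `f(c)` for an
`M`-coded function `f` with domain `[0,a)`, with `c < a`) be a Σ_{n+1}-elementary
cofinal extension of `M`. Then there is a Σ_{n+1}-definable injection of `N`
into `[0,a)`. -/
theorem statement_13 (n : ℕ) (hn : 1 ≤ n) (M N : Type)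
    [lang.Structure M] [lang.Structure N]
    (hPA : PAm M) (hI : ISig n M) (a : M)
    (hMinj : SigmaInjWhole M (n + 1) a)
    (g : M → N) (hel : SigmaElem M N (n + 1) g) (hcf : Cofinal M N g)
    (c : N) (hca : c < g a)
    (hMc : ∀ z : N, ∃ f : M, CodesFunOn f a ∧ SeqAt (g f) c z) :
    SigmaInjWhole N (n + 1) (g a) := by
  obtain ⟨k, rfl⟩ : ∃ k, n = k + 1 := ⟨n - 1, by omega⟩
  exact final hPA hI a hMinj hel c fun z => (hMc z).imp fun _ h => h.2

end ArithFC
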